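/- Let G be a planar, 1-ended, vertex-transitive, locally finite graph, fix a vertex o and a fundamental domain Δ of flags at o, and let φ : Flags(G) → Δ assign to each flag the unique flag of Δ in its Aut(G)-orbit. If f and h are flags of G with φ(f) = φ(h), then there is exactly one automorphism a of G with a(f) = h. -/

import Mathlib

open SimpleGraph

/-- A topological embedding of a graph `G` in the plane: vertices are points, edges are
arcs meeting only at common endpoints and avoiding other vertices. -/
structure PlanarEmbedding {V : Type*} (G : SimpleGraph V) where
  vpos : V → ℝ × ℝ
  vinj : Function.Injective vpos
  arc : ∀ ⦃u v : V⦄, G.Adj u v → Set (ℝ × ℝ)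
  arc_isArc : ∀ ⦃u v : V⦄ (h : G.Adj u v),
    ∃ f : Path (vpos u) (vpos v), Function.Injective f ∧ Set.range f = arc h
  arc_symm : ∀ ⦃u v : V⦄ (h : G.Adj u v), arc h.symm = arc h
  arc_inter : ∀ ⦃u v u' v' : V⦄ (h : G.Adj u v) (h' : G.Adj u' v'),
    s(u, v) ≠ s(u', v') → arc h ∩ arc h' ⊆ vpos '' (({u, v} : Set V) ∩ {u', v'})
  arc_vertex : ∀ ⦃u v : V⦄ (h : G.Adj u v) (w : V), vpos w ∈ arc h → w = u ∨ w = v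

/-- The point set of the embedded graph. -/
def PlanarEmbedding.image {V : Type*} {G : SimpleGraph V} (emb : PlanarEmbedding G) :
    Set (ℝ × ℝ) :=
  Set.range emb.vpos ∪ ⋃ (u : V) (v : V) (h : G.Adj u v), emb.arc h

/-- A face of the embedding: a connected component of the complement of the image. -/
def PlanarEmbedding.IsFace {V : Type*} {G : SimpleGraph V} (emb : PlanarEmbedding G)
    (F : Set (ℝ × ℝ)) : Prop :=
  ∃ x ∈ emb.imageᶜ, F = connectedComponentIn emb.imageᶜ x

/-- The boundary of a face: the set of edges whose arcs lie in the closure of the face. -/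
def PlanarEmbedding.boundaryEdges {V : Type*} {G : SimpleGraph V} (emb : PlanarEmbedding G)
    (F : Set (ℝ × ℝ)) : Set (Sym2 V) :=
  {e | ∃ (u v : V) (h : G.Adj u v), e = s(u, v) ∧ emb.arc h ⊆ closure F}

/-- A peripheral cycle: a cycle that is induced (chordless) and non-separating. -/
def IsPeripheral {V : Type*} (G : SimpleGraph V) {v : V} (w : G.Walk v v) : Prop :=
  w.IsCycle ∧ (∀ a ∈ w.support, ∀ b ∈ w.support, G.Adj a b → s(a, b) ∈ w.edges) ∧
    ({x | x ∉ w.support} = (∅ : Set V) ∨ (G.induce {x | x ∉ w.support}).Connected)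

/-- A 3-connected graph: more than 3 vertices, and removing any at most 2 vertices leaves
it connected. -/
def ThreeConnected {V : Type*} (G : SimpleGraph V) : Prop :=
  (3 < Nat.card V ∨ Infinite V) ∧
    ∀ s : Set V, s.Finite → s.ncard ≤ 2 → (G.induce sᶜ).Connected

/-- A locally finite graph has exactly one end. -/
def OneEnded {V : Type*} (G : SimpleGraph V) : Prop :=
  ∀ K : Finset V, ∃! C : G.ComponentCompl (K : Set V), C.supp.Infinite

/-- A face boundary of `G`, combinatorially: the edge set of a peripheral cycle (this is
embedding-independent, by Whitney's theorem). -/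
def IsFaceBoundary {V : Type*} (G : SimpleGraph V) (F : Set (Sym2 V)) : Prop :=
  ∃ (v : V) (w : G.Walk v v), IsPeripheral G w ∧ F = {e | e ∈ w.edges}

/-- A flag: a triple (vertex, edge, face boundary). -/
abbrev GFlag (V : Type*) := V × Sym2 V × Set (Sym2 V)

def IsFlag {V : Type*} (G : SimpleGraph V) (f : GFlag V) : Prop :=
  f.1 ∈ f.2.1 ∧ f.2.1 ∈ f.2.2 ∧ IsFaceBoundary G f.2.2

/-- The action of an automorphism on flags. -/
def flagMap {V : Type*} {G : SimpleGraph V} (α : G ≃g G) (f : GFlag V) : GFlag V :=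
  (α f.1, Sym2.map ⇑α f.2.1, Sym2.map ⇑α '' f.2.2)

/-- Two flags at a common vertex are incident if they share an edge or a face boundary. -/
def FlagIncident {V : Type*} (f g : GFlag V) : Prop :=
  f.1 = g.1 ∧ (f.2.1 = g.2.1 ∨ f.2.2 = g.2.2)

/-! ### Topological part: `K₅` and `K₃₃` cannot be drawn -/

theorem top_lift2 (p q : ℝ → ℂ) (hp : Continuous p) (hq : Continuous q)
    (hne : ∀ s t, p s ≠ q t) :
    ∃ L : ℝ × ℝ → ℂ, Continuous L ∧ ∀ s t, Complex.exp (L (s, t)) = p s - q t := by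
  have hne0 : p 0 - q 0 ≠ 0 := sub_ne_zero.2 (hne 0 0)
  obtain ⟨F, ⟨-, hF⟩, -⟩ := Complex.isCoveringMapOn_exp.existsUnique_continuousMap_lifts
    (⟨fun x : ℝ × ℝ => p x.1 - q x.2, by fun_prop⟩ : C(ℝ × ℝ, ℂ)) (a₀ := ((0 : ℝ), (0 : ℝ)))
    (e₀ := Complex.log (p 0 - q 0)) (Complex.exp_log hne0)
    (fun x => sub_ne_zero.2 (hne x.1 x.2))
  exact ⟨F, F.continuous, fun s t => congrFun hF (s, t)⟩

theorem top_const (d : ℝ → ℂ) (hd : Continuous d) (h1 : ∀ s, Complex.exp (d s) = 1) :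
    d 1 = d 0 := by
  have hu := Complex.isCoveringMapOn_exp.existsUnique_continuousMap_lifts
    (ContinuousMap.const ℝ (1 : ℂ)) (a₀ := (0 : ℝ)) (e₀ := d 0) (by simp [h1]) (by simp)
  have := hu.unique (y₁ := ⟨d, hd⟩) (y₂ := ContinuousMap.const ℝ (d 0))
    ⟨rfl, by ext s; simp [h1]⟩ ⟨rfl, by ext s; simp [h1]⟩
  exact congrArg (fun F : C(ℝ, ℂ) => F 1) this

theorem top_change (f g : ℝ → ℂ) (hf : Continuous f) (hg : Continuous g) (k : ℂ)
    (h : ∀ s, Complex.exp (f s) = Complex.exp (g s + k)) : f 1 - f 0 = g 1 - g 0 := by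
  have := top_const (fun s => f s - (g s + k)) (by fun_prop)
    (fun s => by rw [Complex.exp_sub, h, div_self (Complex.exp_ne_zero _)])
  linear_combination this

noncomputable def topG {m : ℕ} (P : Fin m → ℂ) (v w : Fin m) : ℂ :=
  if v < w then Complex.log (P v - P w) else Complex.log (P w - P v) + Real.pi * Complex.I

def topS {m : ℕ} (v w : Fin m) : ℤ := if v < w then -1 else 1

theorem topG_exp {m : ℕ} (P : Fin m → ℂ) (v w : Fin m) (h : P v ≠ P w) :
    Complex.exp (topG P v w) = P v - P w := by
  unfold topG
  split_ifs
  · exact Complex.exp_log (sub_ne_zero.2 h)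
  · rw [Complex.exp_add, Complex.exp_log (sub_ne_zero.2 h.symm), Complex.exp_pi_mul_I]; ring

theorem topG_sub {m : ℕ} (P : Fin m → ℂ) (v w : Fin m) (h : v ≠ w) :
    topG P v w - topG P w v = topS v w * (Real.pi * Complex.I) := by
  unfold topG topS
  rcases lt_or_gt_of_ne h with h | h
  · simp [h, h.not_gt]
  · simp [h, h.not_gt]

theorem top_n {m : ℕ} (P : Fin m → ℂ) (p : ℝ → ℂ) (hp : Continuous p) (a b c : Fin m)
    (h0 : p 0 = P a) (h1 : p 1 = P b) (hne : ∀ s, p s ≠ P c) :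
    ∃ n : ℤ, ∀ (l : ℝ → ℂ) (k : ℂ), Continuous l →
      (∀ s, Complex.exp (l s + k) = p s - P c) →
      l 1 - l 0 = topG P b c - topG P a c + n * (2 * Real.pi * Complex.I) := by
  obtain ⟨L, hL, hL2⟩ := top_lift2 p (fun _ => P c) hp continuous_const (fun s _ => hne s)
  have e0 : Complex.exp (L (0, 0)) = Complex.exp (topG P a c) := by
    rw [hL2, topG_exp, h0]; rw [← h0]; exact hne 0
  have e1 : Complex.exp (L (1, 0)) = Complex.exp (topG P b c) := by
    rw [hL2, topG_exp, h1]; rw [← h1]; exact hne 1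
  obtain ⟨n0, hn0⟩ := Complex.exp_eq_exp_iff_exists_int.1 e0
  obtain ⟨n1, hn1⟩ := Complex.exp_eq_exp_iff_exists_int.1 e1
  refine ⟨n1 - n0, fun l k hl hl2 => ?_⟩
  have := top_change (fun s => L (s, 0)) l (by fun_prop) hl k
    (fun s => by rw [hl2, hL2])
  rw [← this, hn0, hn1]
  push_cast
  ring

theorem top_eqs {m : ℕ} (E : Fin m → Fin m → Prop) (P : Fin m → ℂ)
    (p : Fin m → Fin m → ℝ → ℂ)
    (hp : ∀ a b, E a b → Continuous (p a b) ∧ p a b 0 = P a ∧ p a b 1 = P b)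
    (hv : ∀ a b c, E a b → c ≠ a → c ≠ b → ∀ s, p a b s ≠ P c)
    (hd : ∀ a b c d, E a b → E c d → a ≠ c → a ≠ d → b ≠ c → b ≠ d →
      ∀ s t, p a b s ≠ p c d t) :
    ∃ n : Fin m → Fin m → Fin m → ℤ, ∀ a b c d, E a b → E c d → a ≠ c → a ≠ d → b ≠ c → b ≠ d →
      2 * (n a b c + n c d b - n a b d - n c d a) =
        - (topS b c - topS a c + topS a d - topS b d) := by
  have key : ∀ a b c, ∃ n : ℤ, E a b → c ≠ a → c ≠ b → ∀ (l : ℝ → ℂ) (k : ℂ), Continuous l →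
      (∀ s, Complex.exp (l s + k) = p a b s - P c) →
      l 1 - l 0 = topG P b c - topG P a c + n * (2 * Real.pi * Complex.I) := by
    intro a b c
    by_cases h : E a b ∧ c ≠ a ∧ c ≠ b
    · obtain ⟨n, hn⟩ := top_n P (p a b) (hp a b h.1).1 a b c (hp a b h.1).2.1 (hp a b h.1).2.2
        (hv a b c h.1 h.2.1 h.2.2)
      exact ⟨n, fun _ _ _ => hn⟩
    · exact ⟨0, fun h1 h2 h3 => absurd ⟨h1, h2, h3⟩ h⟩
  choose n hn using key
  refine ⟨n, fun a b c d hab hcd hac had hbc hbd => ?_⟩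
  obtain ⟨L, hL, hL2⟩ := top_lift2 (p a b) (p c d) (hp a b hab).1 (hp c d hcd).1
    (hd a b c d hab hcd hac had hbc hbd)
  have e1 := hn a b c hab hac.symm hbc.symm (fun s => L (s, 0)) 0 (by fun_prop)
    (fun s => by rw [add_zero, hL2, (hp c d hcd).2.1])
  have e2 := hn a b d hab had.symm hbd.symm (fun s => L (s, 1)) 0 (by fun_prop)
    (fun s => by rw [add_zero, hL2, (hp c d hcd).2.2])
  have e3 := hn c d a hcd hac had (fun s => L (0, s)) (Real.pi * Complex.I) (by fun_prop)
    (fun s => by rw [Complex.exp_add, hL2, (hp a b hab).2.1, Complex.exp_pi_mul_I]; ring)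
  have e4 := hn c d b hcd hbc hbd (fun s => L (1, s)) (Real.pi * Complex.I) (by fun_prop)
    (fun s => by rw [Complex.exp_add, hL2, (hp a b hab).2.2, Complex.exp_pi_mul_I]; ring)
  have g1 := topG_sub P b c hbc
  have g2 := topG_sub P a c hac
  have g3 := topG_sub P a d had
  have g4 := topG_sub P b d hbd
  have hpi : (Real.pi * Complex.I : ℂ) ≠ 0 := by
    simp [Real.pi_ne_zero, Complex.I_ne_zero]
  have : ((2 * (n a b c + n c d b - n a b d - n c d a) : ℤ) : ℂ) =
        ((- (topS b c - topS a c + topS a d - topS b d) : ℤ) : ℂ) := by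
    apply mul_right_cancel₀ hpi
    push_cast
    linear_combination -e1 - e4 + e2 + e3 - g1 + g2 - g3 + g4
  exact_mod_cast this

theorem top_noK5 (P : Fin 5 → ℂ) (p : Fin 5 → Fin 5 → ℝ → ℂ)
    (hp : ∀ a b, a < b → Continuous (p a b) ∧ p a b 0 = P a ∧ p a b 1 = P b)
    (hv : ∀ a b c, a < b → c ≠ a → c ≠ b → ∀ s, p a b s ≠ P c)
    (hd : ∀ a b c d, a < b → c < d → a ≠ c → a ≠ d → b ≠ c → b ≠ d →
      ∀ s t, p a b s ≠ p c d t) : False := by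
  obtain ⟨n, hn⟩ := top_eqs (fun a b => a < b) P p hp hv hd
  have H : ∀ a b c d : Fin 5, a < b → c < d → a ≠ c → a ≠ d → b ≠ c → b ≠ d → ∀ z : ℤ,
      z = - (topS b c - topS a c + topS a d - topS b d) →
      2 * (n a b c + n c d b - n a b d - n c d a) = z := by
    intro a b c d h1 h2 h3 h4 h5 h6 z hz
    rw [hz, hn a b c d h1 h2 h3 h4 h5 h6]
  have e1 := H 0 1 2 3 (by decide) (by decide) (by decide) (by decide) (by decide) (by decide) 0 (by decide)
  have e2 := H 0 1 2 4 (by decide) (by decide) (by decide) (by decide) (by decide) (by decide) 0 (by decide)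
  have e3 := H 0 1 3 4 (by decide) (by decide) (by decide) (by decide) (by decide) (by decide) 0 (by decide)
  have e4 := H 0 2 1 3 (by decide) (by decide) (by decide) (by decide) (by decide) (by decide) (-2) (by decide)
  have e5 := H 0 2 1 4 (by decide) (by decide) (by decide) (by decide) (by decide) (by decide) (-2) (by decide)
  have e6 := H 0 2 3 4 (by decide) (by decide) (by decide) (by decide) (by decide) (by decide) 0 (by decide)
  have e7 := H 0 3 1 2 (by decide) (by decide) (by decide) (by decide) (by decide) (by decide) 0 (by decide)
  have e8 := H 0 3 1 4 (by decide) (by decide) (by decide) (by decide) (by decide) (by decide) (-2) (by decide)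
  have e9 := H 0 3 2 4 (by decide) (by decide) (by decide) (by decide) (by decide) (by decide) (-2) (by decide)
  have e10 := H 0 4 1 2 (by decide) (by decide) (by decide) (by decide) (by decide) (by decide) 0 (by decide)
  have e11 := H 0 4 1 3 (by decide) (by decide) (by decide) (by decide) (by decide) (by decide) 0 (by decide)
  have e12 := H 0 4 2 3 (by decide) (by decide) (by decide) (by decide) (by decide) (by decide) 0 (by decide)
  have e13 := H 1 2 3 4 (by decide) (by decide) (by decide) (by decide) (by decide) (by decide) 0 (by decide)
  have e14 := H 1 3 2 4 (by decide) (by decide) (by decide) (by decide) (by decide) (by decide) (-2) (by decide)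
  have e15 := H 1 4 2 3 (by decide) (by decide) (by decide) (by decide) (by decide) (by decide) 0 (by decide)
  omega

theorem top_noK33 (P : Fin 6 → ℂ) (p : Fin 6 → Fin 6 → ℝ → ℂ)
    (hp : ∀ a b, (a < 3 ∧ 3 ≤ b) → Continuous (p a b) ∧ p a b 0 = P a ∧ p a b 1 = P b)
    (hv : ∀ a b c, (a < 3 ∧ 3 ≤ b) → c ≠ a → c ≠ b → ∀ s, p a b s ≠ P c)
    (hd : ∀ a b c d, (a < 3 ∧ 3 ≤ b) → (c < 3 ∧ 3 ≤ d) → a ≠ c → a ≠ d → b ≠ c → b ≠ d →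
      ∀ s t, p a b s ≠ p c d t) : False := by
  obtain ⟨n, hn⟩ := top_eqs (fun a b => a < 3 ∧ 3 ≤ b) P p hp hv hd
  have H : ∀ a c b d : Fin 6, (a < 3 ∧ 3 ≤ b) → (c < 3 ∧ 3 ≤ d) →
      (a ≠ c ∧ a ≠ d ∧ b ≠ c ∧ b ≠ d) → ∀ z : ℤ,
      z = - (topS b c - topS a c + topS a d - topS b d) →
      2 * (n a b c + n c d b - n a b d - n c d a) = z := by
    intro a c b d h1 h2 h3 z hz
    rw [hz, hn a b c d h1 h2 h3.1 h3.2.1 h3.2.2.1 h3.2.2.2]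
  have e1 := H 0 1 3 4 (by decide) (by decide) (by decide) (-2) (by decide)
  have e2 := H 0 1 3 5 (by decide) (by decide) (by decide) (-2) (by decide)
  have e3 := H 0 1 4 3 (by decide) (by decide) (by decide) 0 (by decide)
  have e4 := H 0 1 4 5 (by decide) (by decide) (by decide) (-2) (by decide)
  have e5 := H 0 1 5 3 (by decide) (by decide) (by decide) 0 (by decide)
  have e6 := H 0 1 5 4 (by decide) (by decide) (by decide) 0 (by decide)
  have f1 := H 0 2 3 4 (by decide) (by decide) (by decide) (-2) (by decide)
  have f2 := H 0 2 3 5 (by decide) (by decide) (by decide) (-2) (by decide)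
  have f3 := H 0 2 4 3 (by decide) (by decide) (by decide) 0 (by decide)
  have f4 := H 0 2 4 5 (by decide) (by decide) (by decide) (-2) (by decide)
  have f5 := H 0 2 5 3 (by decide) (by decide) (by decide) 0 (by decide)
  have f6 := H 0 2 5 4 (by decide) (by decide) (by decide) 0 (by decide)
  have g1 := H 1 2 3 4 (by decide) (by decide) (by decide) (-2) (by decide)
  have g2 := H 1 2 3 5 (by decide) (by decide) (by decide) (-2) (by decide)
  have g3 := H 1 2 4 3 (by decide) (by decide) (by decide) 0 (by decide)
  have g4 := H 1 2 4 5 (by decide) (by decide) (by decide) (-2) (by decide)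
  have g5 := H 1 2 5 3 (by decide) (by decide) (by decide) 0 (by decide)
  have g6 := H 1 2 5 4 (by decide) (by decide) (by decide) 0 (by decide)
  omega

/-! ### Reachability inside a set of vertices -/

inductive Rch {V : Type*} (G : SimpleGraph V) (S : Set V) (u : V) : V → Prop
  | refl (h : u ∈ S) : Rch G S u u
  | step {v w : V} (h : Rch G S u v) (ha : G.Adj v w) (hw : w ∈ S) : Rch G S u w

def Conn {V : Type*} (G : SimpleGraph V) (S : Set V) : Prop :=
  ∀ u ∈ S, ∀ v ∈ S, Rch G S u v

def Touch {V : Type*} (G : SimpleGraph V) (S T : Set V) : Prop :=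
  ∃ u ∈ S, ∃ v ∈ T, G.Adj u v

section Reach

variable {V : Type*} {G : SimpleGraph V} {S T : Set V} {u v w : V}

theorem Rch.mem_left (h : Rch G S u v) : u ∈ S := by
  induction h with
  | refl h => exact h
  | step _ _ _ ih => exact ih

theorem Rch.mem_right (h : Rch G S u v) : v ∈ S := by
  cases h with
  | refl h => exact h
  | step _ _ h => exact h

theorem Rch.mono (hST : S ⊆ T) (h : Rch G S u v) : Rch G T u v := by
  induction h with
  | refl h => exact .refl (hST h)
  | step _ ha hw ih => exact .step ih ha (hST hw)

theorem Rch.trans (h : Rch G S u v) (h' : Rch G S v w) : Rch G S u w := by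
  induction h' with
  | refl _ => exact h
  | step _ ha hw ih => exact .step ih ha hw

theorem Rch.symm (h : Rch G S u v) : Rch G S v u := by
  induction h with
  | refl h => exact .refl h
  | step h ha hw ih => exact Rch.trans (.step (.refl hw) ha.symm h.mem_right) ih

/-- An invariant containing the start and closed under steps holds at the end. -/
theorem Rch.inv (h : Rch G S u v) (P : V → Prop) (h0 : P u)
    (hs : ∀ x y, P x → x ∈ S → y ∈ S → G.Adj x y → P y) : P v := by
  induction h with
  | refl h => exact h0
  | step h ha hw ih => exact hs _ _ ih h.mem_right hw ha

theorem Rch.self (h : Rch G S u v) : Rch G {x | Rch G S u x} u v := by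
  induction h with
  | refl h => exact .refl (Rch.refl h)
  | step h ha hw ih => exact .step ih ha (Rch.step h ha hw)

theorem conn_of_center (c : V) (h : ∀ x ∈ S, Rch G S c x) : Conn G S :=
  fun x hx y hy => (h x hx).symm.trans (h y hy)

theorem conn_comp (G : SimpleGraph V) (S : Set V) (u : V) : Conn G {x | Rch G S u x} :=
  conn_of_center u fun _ hx => hx.self

theorem conn_singleton (u : V) : Conn G {u} := by
  rintro x rfl y rfl
  exact .refl rfl

theorem Touch.symm (h : Touch G S T) : Touch G T S := by
  obtain ⟨u, hu, v, hv, h⟩ := h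
  exact ⟨v, hv, u, hu, h.symm⟩

theorem Touch.mono {S' T' : Set V} (h : Touch G S T) (hS : S ⊆ S') (hT : T ⊆ T') :
    Touch G S' T' := by
  obtain ⟨u, hu, v, hv, h⟩ := h
  exact ⟨u, hS hu, v, hT hv, h⟩

theorem Conn.union_touch (hS : Conn G S) (hT : Conn G T) (h : Touch G S T) :
    Conn G (S ∪ T) := by
  obtain ⟨u, hu, v, hv, h⟩ := h
  refine conn_of_center u ?_
  rintro x (hx | hx)
  · exact (hS u hu x hx).mono Set.subset_union_left
  · exact Rch.trans (.step (.refl (Or.inl hu)) h (Or.inr hv))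
      ((hT v hv x hx).mono Set.subset_union_right)

theorem Conn.union_mem (hS : Conn G S) (hT : Conn G T) (h1 : u ∈ S) (h2 : u ∈ T) :
    Conn G (S ∪ T) := by
  refine conn_of_center u ?_
  rintro x (hx | hx)
  · exact (hS u h1 x hx).mono Set.subset_union_left
  · exact (hT u h2 x hx).mono Set.subset_union_right

/-- Following a walk in `S` until it first meets `X`. -/
theorem Rch.sep (h : Rch G S u v) (X : Set V) (hu : u ∉ X) :
    Rch G (S \ X) u v ∨ ∃ p q, Rch G (S \ X) u p ∧ q ∈ X ∧ q ∈ S ∧ G.Adj p q := by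
  induction h with
  | refl h => exact Or.inl (.refl ⟨h, hu⟩)
  | @step v w h ha hw ih =>
    rcases ih with ih | ih
    · by_cases hX : w ∈ X
      · exact Or.inr ⟨_, _, ih, hX, hw, ha⟩
      · exact Or.inl (.step ih ha ⟨hw, hX⟩)
    · exact Or.inr ih

theorem Rch.map (α : G ≃g G) (h : Rch G S u v) : Rch G (α '' S) (α u) (α v) := by
  induction h with
  | refl h => exact .refl ⟨_, h, rfl⟩
  | step _ ha hw ih => exact .step ih (α.map_adj_iff.2 ha) ⟨_, hw, rfl⟩

theorem Conn.map (α : G ≃g G) (h : Conn G S) : Conn G (α '' S) := by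
  rintro _ ⟨x, hx, rfl⟩ _ ⟨y, hy, rfl⟩
  exact (h x hx y hy).map α

end Reach

/-! ### No `K₅` or `K₃₃` minors in a plane graph -/

section Minor

variable {V : Type*} {G : SimpleGraph V}

def PlanarEmbedding.reg (emb : PlanarEmbedding G) (S : Set V) : Set (ℝ × ℝ) :=
  {x | (∃ v ∈ S, x = emb.vpos v) ∨ ∃ (u v : V) (h : G.Adj u v), u ∈ S ∧ v ∈ S ∧ x ∈ emb.arc h}

theorem PlanarEmbedding.reg_disj (emb : PlanarEmbedding G) {S T : Set V} (h : Disjoint S T)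
    {x : ℝ × ℝ} (h1 : x ∈ emb.reg S) (h2 : x ∈ emb.reg T) : False := by
  have hne : ∀ v ∈ S, ∀ w ∈ T, v ≠ w := fun v hv w hw e =>
    Set.disjoint_left.1 h hv (e ▸ hw)
  rcases h1 with ⟨v, hv, rfl⟩ | ⟨u, v, ha, hu, hv, hx⟩
  · rcases h2 with ⟨w, hw, e⟩ | ⟨u', v', ha', hu', hv', hx'⟩
    · exact hne v hv w hw (emb.vinj e)
    · rcases emb.arc_vertex ha' v hx' with e | e
      · exact hne v hv _ hu' e
      · exact hne v hv _ hv' e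
  · rcases h2 with ⟨w, hw, rfl⟩ | ⟨u', v', ha', hu', hv', hx'⟩
    · rcases emb.arc_vertex ha w hx with e | e
      · exact hne _ hu w hw e.symm
      · exact hne _ hv w hw e.symm
    · have hs : s(u, v) ≠ s(u', v') := by
        intro e
        rcases Sym2.eq_iff.1 e with ⟨e1, e2⟩ | ⟨e1, e2⟩
        · exact hne _ hu _ hu' e1
        · exact hne _ hu _ hv' e1
      obtain ⟨y, ⟨hy1, hy2⟩, -⟩ := emb.arc_inter ha ha' hs ⟨hx, hx'⟩
      simp only [Set.mem_insert_iff, Set.mem_singleton_iff] at hy1 hy2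
      rcases hy1 with rfl | rfl <;> rcases hy2 with rfl | rfl
      · exact hne _ hu _ hu' rfl
      · exact hne _ hu _ hv' rfl
      · exact hne _ hv _ hu' rfl
      · exact hne _ hv _ hv' rfl

theorem PlanarEmbedding.path_of_rch (emb : PlanarEmbedding G) {S : Set V} {u v : V}
    (h : Rch G S u v) : JoinedIn (emb.reg S) (emb.vpos u) (emb.vpos v) := by
  induction h with
  | refl h => exact JoinedIn.refl (Or.inl ⟨u, h, rfl⟩)
  | @step v w h ha hw ih =>
    refine ih.trans ?_
    obtain ⟨f, -, hf⟩ := emb.arc_isArc ha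
    refine ⟨f, fun t => Or.inr ⟨v, w, ha, h.mem_right, hw, ?_⟩⟩
    rw [← hf]
    exact ⟨t, rfl⟩

theorem minor_draw (emb : PlanarEmbedding G) {m : ℕ} (E : Fin m → Fin m → Prop)
    (S : Fin m → Set V) (hE : ∀ a b, E a b → a ≠ b) (hc : ∀ i, Conn G (S i)) (hn : ∀ i, (S i).Nonempty)
    (hd : ∀ i j, i ≠ j → Disjoint (S i) (S j))
    (ht : ∀ i j, E i j → Touch G (S i) (S j)) :
    ∃ (P : Fin m → ℂ) (p : Fin m → Fin m → ℝ → ℂ),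
    (∀ a b, E a b → Continuous (p a b) ∧ p a b 0 = P a ∧ p a b 1 = P b) ∧
    (∀ a b c, E a b → c ≠ a → c ≠ b → ∀ s, p a b s ≠ P c) ∧
    (∀ a b c d, E a b → E c d → a ≠ c → a ≠ d → b ≠ c → b ≠ d →
      ∀ s t, p a b s ≠ p c d t) := by
  choose v hv using hn
  let Φ : ℝ × ℝ → ℂ := Complex.equivRealProdCLM.symm
  have hΦ : Continuous Φ := Complex.equivRealProdCLM.symm.continuous
  have hΦi : Function.Injective Φ := Complex.equivRealProdCLM.symm.injective
  have key : ∀ a b, ∃ q : ℝ → ℝ × ℝ, E a b → Continuous q ∧ q 0 = emb.vpos (v a) ∧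
      q 1 = emb.vpos (v b) ∧ ∀ s, q s ∈ emb.reg (S a ∪ S b) := by
    intro a b
    by_cases h : E a b
    · obtain ⟨f, hf⟩ := emb.path_of_rch (((hc a).union_touch (hc b) (ht a b h)) (v a)
        (Or.inl (hv a)) (v b) (Or.inr (hv b)))
      refine ⟨f.extend, fun _ => ⟨f.continuous_extend, f.extend_zero, f.extend_one, fun s => ?_⟩⟩
      have : f.extend s ∈ Set.range f := by
        rw [← f.extend_range]; exact ⟨s, rfl⟩
      obtain ⟨t, ht⟩ := this
      rw [← ht]; exact hf t
    · exact ⟨fun _ => 0, fun h' => absurd h' h⟩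
  choose q hq using key
  refine ⟨fun a => Φ (emb.vpos (v a)), fun a b s => Φ (q a b s), ?_, ?_, ?_⟩
  · intro a b h
    obtain ⟨h1, h2, h3, -⟩ := hq a b h
    exact ⟨hΦ.comp h1, congrArg Φ h2, congrArg Φ h3⟩
  · intro a b c h hca hcb s e
    have e := hΦi e
    have h1 := (hq a b h).2.2.2 s
    rw [e] at h1
    refine emb.reg_disj (T := S c) ?_ h1 (Or.inl ⟨_, hv c, rfl⟩)
    rw [Set.disjoint_union_left]
    exact ⟨hd _ _ hca.symm, hd _ _ hcb.symm⟩
  · intro a b c d h h' hac had hbc hbd s t e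
    have e := hΦi e
    have h1 := (hq a b h).2.2.2 s
    have h2 := (hq c d h').2.2.2 t
    rw [e] at h1
    refine emb.reg_disj ?_ h1 h2
    rw [Set.disjoint_union_left, Set.disjoint_union_right, Set.disjoint_union_right]
    exact ⟨⟨hd _ _ hac, hd _ _ had⟩, hd _ _ hbc, hd _ _ hbd⟩

theorem noK5 (emb : PlanarEmbedding G) (A B C X Y : Set V)
    (cA : Conn G A) (cB : Conn G B) (cC : Conn G C) (cX : Conn G X) (cY : Conn G Y)
    (tAB : Touch G A B) (tAC : Touch G A C) (tAX : Touch G A X) (tAY : Touch G A Y)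
    (tBC : Touch G B C) (tBX : Touch G B X) (tBY : Touch G B Y)
    (tCX : Touch G C X) (tCY : Touch G C Y) (tXY : Touch G X Y)
    (dAB : Disjoint A B) (dAC : Disjoint A C) (dAX : Disjoint A X) (dAY : Disjoint A Y)
    (dBC : Disjoint B C) (dBX : Disjoint B X) (dBY : Disjoint B Y)
    (dCX : Disjoint C X) (dCY : Disjoint C Y) (dXY : Disjoint X Y) : False := by
  have hn : ∀ {S T : Set V}, Touch G S T → S.Nonempty := fun ⟨u, hu, _⟩ => ⟨u, hu⟩
  obtain ⟨P, p, h1, h2, h3⟩ := minor_draw emb (fun a b : Fin 5 => a < b) ![A, B, C, X, Y]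
    (fun a b h => ne_of_lt h)
    (by simp [Fin.forall_fin_succ, *])
    (by simp [Fin.forall_fin_succ, hn tAB, hn tBC, hn tCX, hn tXY, hn tXY.symm])
    (by simp [Fin.forall_fin_succ, *, dAB.symm, dAC.symm, dAX.symm, dAY.symm, dBC.symm,
          dBX.symm, dBY.symm, dCX.symm, dCY.symm, dXY.symm])
    (by simp [Fin.forall_fin_succ, *])
  exact top_noK5 P p h1 h2 h3

theorem noK33 (emb : PlanarEmbedding G) (A B C X Y Z : Set V)
    (cA : Conn G A) (cB : Conn G B) (cC : Conn G C) (cX : Conn G X) (cY : Conn G Y)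
    (cZ : Conn G Z)
    (tAX : Touch G A X) (tAY : Touch G A Y) (tAZ : Touch G A Z)
    (tBX : Touch G B X) (tBY : Touch G B Y) (tBZ : Touch G B Z)
    (tCX : Touch G C X) (tCY : Touch G C Y) (tCZ : Touch G C Z)
    (dAB : Disjoint A B) (dAC : Disjoint A C) (dAX : Disjoint A X) (dAY : Disjoint A Y)
    (dAZ : Disjoint A Z)
    (dBC : Disjoint B C) (dBX : Disjoint B X) (dBY : Disjoint B Y) (dBZ : Disjoint B Z)
    (dCX : Disjoint C X) (dCY : Disjoint C Y) (dCZ : Disjoint C Z)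
    (dXY : Disjoint X Y) (dXZ : Disjoint X Z) (dYZ : Disjoint Y Z) : False := by
  have hn : ∀ {S T : Set V}, Touch G S T → S.Nonempty := fun ⟨u, hu, _⟩ => ⟨u, hu⟩
  obtain ⟨P, p, h1, h2, h3⟩ := minor_draw emb (fun a b : Fin 6 => a < 3 ∧ 3 ≤ b)
    ![A, B, C, X, Y, Z]
    (fun a b h => ne_of_lt (lt_of_lt_of_le h.1 h.2))
    (by simp [Fin.forall_fin_succ, *])
    (by simp [Fin.forall_fin_succ, hn tAX, hn tBX, hn tCX, hn tAX.symm, hn tAY.symm, hn tAZ.symm])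
    (by simp [Fin.forall_fin_succ, *, dAB.symm, dAC.symm, dAX.symm, dAY.symm, dBC.symm,
          dBX.symm, dBY.symm, dCX.symm, dCY.symm, dXY.symm, dAZ.symm, dBZ.symm, dCZ.symm,
          dXZ.symm, dYZ.symm])
    (by
      intro i j h
      fin_cases i <;> fin_cases j <;> first | (exfalso; revert h; decide) | assumption)
  exact top_noK33 P p h1 h2 h3

end Minor

/-! ### Separators -/

section Sep

variable {V : Type*} {G : SimpleGraph V}

theorem rch_of_reach {K : Set V} {u v : ↥K} (h : (G.induce K).Reachable u v) :
    Rch G K u v := by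
  obtain ⟨p⟩ := h
  induction p with
  | nil => exact .refl (Subtype.property _)
  | cons ha _ ih => exact Rch.trans (.step (.refl (Subtype.property _)) ha (Subtype.property _)) ih

theorem mk_of_rch {K : Set V} {u v : V} (h : Rch G Kᶜ u v) :
    G.componentComplMk h.mem_left = G.componentComplMk h.mem_right := by
  induction h with
  | refl h => rfl
  | step h ha hw ih => exact ih.trans (componentComplMk_eq_of_adj G _ _ ha)

theorem supp_mk {K : Set V} {u : V} (hu : u ∉ K) :
    (G.componentComplMk hu).supp = {w | Rch G Kᶜ u w} := by
  ext w
  constructor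
  · rintro ⟨hw, h⟩
    exact (rch_of_reach (ConnectedComponent.exact h)).symm
  · intro h
    exact ⟨h.mem_right, (mk_of_rch h).symm⟩

theorem one_end_unique (hone : OneEnded G) (K : Finset V) {u v : V}
    (hu : {w | Rch G (K : Set V)ᶜ u w}.Infinite) (hv : {w | Rch G (K : Set V)ᶜ v w}.Infinite) :
    Rch G (K : Set V)ᶜ u v := by
  obtain ⟨C, -, hC⟩ := hone K
  obtain ⟨_, hu'⟩ := hu.nonempty
  obtain ⟨_, hv'⟩ := hv.nonempty
  have h1 := hC (G.componentComplMk hu'.mem_left) (by show Set.Infinite _; rw [supp_mk]; exact hu)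
  have h2 := hC (G.componentComplMk hv'.mem_left) (by show Set.Infinite _; rw [supp_mk]; exact hv)
  have h3 : v ∈ (G.componentComplMk hu'.mem_left).supp := by
    rw [h1, ← h2]; exact ⟨_, rfl⟩
  rw [supp_mk] at h3
  exact h3

theorem one_end_conn (htrans : ∀ u v : V, ∃ α : G ≃g G, α u = v) (hone : OneEnded G) :
    Conn G (Set.univ : Set V) ∧ Infinite V := by
  have hE : ((∅ : Finset V) : Set V)ᶜ = Set.univ := by simp
  obtain ⟨C, hC, -⟩ := hone ∅
  have hinf : Infinite V := by
    by_contra h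
    rw [not_infinite_iff_finite] at h
    exact hC (Set.toFinite _)
  refine ⟨?_, hinf⟩
  obtain ⟨c, hc⟩ := hC.nonempty
  obtain ⟨hc1, hc2⟩ := hc
  rw [← hc2, supp_mk, hE] at hC
  have key : ∀ u : V, {w | Rch G Set.univ u w}.Infinite := by
    intro u
    obtain ⟨α, rfl⟩ := htrans c u
    have : α '' {w | Rch G Set.univ c w} ⊆ {w | Rch G Set.univ (α c) w} := by
      rintro _ ⟨w, hw, rfl⟩
      exact (hw.map α).mono (Set.subset_univ _)
    exact (hC.image α.injective.injOn).mono this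
  intro u _ v _
  have := one_end_unique hone ∅ (u := u) (v := v) (by rw [hE]; exact key u) (by rw [hE]; exact key v)
  rwa [hE] at this

variable [DecidableEq V] [G.LocallyFinite]

def nbF (G : SimpleGraph V) [G.LocallyFinite] (X : Finset V) : Finset V :=
  X.biUnion (fun x => G.neighborFinset x) \ X

theorem mem_nbF {X : Finset V} {y : V} : y ∈ nbF G X ↔ (∃ x ∈ X, G.Adj x y) ∧ y ∉ X := by
  simp [nbF]

theorem nbF_sub (A B : Finset V) :
    (nbF G (A ∩ B)).card + (nbF G (A ∪ B)).card ≤ (nbF G A).card + (nbF G B).card := by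
  rw [← Finset.card_union_add_card_inter, ← Finset.card_union_add_card_inter (nbF G A)]
  refine Nat.add_le_add (Finset.card_le_card ?_) (Finset.card_le_card ?_)
  · intro y
    simp only [Finset.mem_union, mem_nbF, Finset.mem_inter]
    rintro (⟨⟨x, hx, h⟩, hy⟩ | ⟨⟨x, hx, h⟩, hy⟩)
    · by_cases hA : y ∈ A
      · exact Or.inr ⟨⟨x, hx.2, h⟩, fun hB => hy ⟨hA, hB⟩⟩
      · exact Or.inl ⟨⟨x, hx.1, h⟩, hA⟩
    · rcases hx with hx | hx
      · exact Or.inl ⟨⟨x, hx, h⟩, fun hB => hy (Or.inl hB)⟩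
      · exact Or.inr ⟨⟨x, hx, h⟩, fun hB => hy (Or.inr hB)⟩
  · intro y
    simp only [Finset.mem_union, mem_nbF, Finset.mem_inter]
    rintro ⟨⟨⟨x, hx, h⟩, _⟩, ⟨_, hy⟩⟩
    exact ⟨⟨⟨x, hx.1, h⟩, fun hB => hy (Or.inl hB)⟩, ⟨⟨x, hx.2, h⟩, fun hB => hy (Or.inr hB)⟩⟩

theorem nbF_image (α : G ≃g G) (X : Finset V) :
    nbF G (X.image α) = (nbF G X).image α := by
  ext y
  obtain ⟨y, rfl⟩ := α.surjective y
  simp [mem_nbF, α.map_adj_iff]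

theorem nbF_nonempty (hconn : Conn G (Set.univ : Set V)) [Infinite V] {X : Finset V}
    (hX : X.Nonempty) : (nbF G X).Nonempty := by
  by_contra h
  rw [Finset.not_nonempty_iff_eq_empty] at h
  obtain ⟨x, hx⟩ := hX
  obtain ⟨z, hz⟩ := Infinite.exists_notMem_finset X
  refine hz ((hconn x trivial z trivial).inv (fun y => y ∈ X) hx ?_)
  intro p q hp _ _ hpq
  by_contra hq
  have : q ∈ nbF G X := mem_nbF.2 ⟨⟨p, hp, hpq⟩, hq⟩
  rw [h] at this
  simp at this

theorem nb_three (htrans : ∀ u v : V, ∃ α : G ≃g G, α u = v)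
    (hconn : Conn G (Set.univ : Set V)) [Infinite V] (hdeg : ∀ v, 3 ≤ G.degree v)
    (X : Finset V) (hX : X.Nonempty) : 3 ≤ (nbF G X).card := by
  classical
  by_contra hcon
  have hP : ∃ k, ∃ X : Finset V, X.Nonempty ∧ (nbF G X).card = k := ⟨_, X, hX, rfl⟩
  obtain ⟨k, hk, hkmin, hk2⟩ : ∃ k, (∃ X : Finset V, X.Nonempty ∧ (nbF G X).card = k) ∧
      (∀ Y : Finset V, Y.Nonempty → k ≤ (nbF G Y).card) ∧ k ≤ 2 :=
    ⟨Nat.find hP, Nat.find_spec hP, fun Y hY => Nat.find_min' hP ⟨Y, hY, rfl⟩,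
      (Nat.find_min' hP ⟨X, hX, rfl⟩).trans (by omega)⟩
  have hQ : ∃ n, ∃ X : Finset V, X.Nonempty ∧ (nbF G X).card = k ∧ X.card = n := by
    obtain ⟨X, h1, h2⟩ := hk
    exact ⟨_, X, h1, h2, rfl⟩
  obtain ⟨n, ⟨X, hX, hXk, hXn⟩, hnmin⟩ :
      ∃ n, (∃ X : Finset V, X.Nonempty ∧ (nbF G X).card = k ∧ X.card = n) ∧
      (∀ Y : Finset V, Y.Nonempty → Y.card < n → k + 1 ≤ (nbF G Y).card) := by
    refine ⟨Nat.find hQ, Nat.find_spec hQ, fun Y hY hlt => ?_⟩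
    have h1 := hkmin Y hY
    by_contra h2
    have := Nat.find_min' hQ ⟨Y, hY, by omega, rfl⟩
    omega
  have hn2 : 2 ≤ n := by
    by_contra h
    have h1 : X.card = 1 := by have := hX.card_pos; omega
    obtain ⟨x, rfl⟩ := Finset.card_eq_one.1 h1
    have h2 : nbF G {x} = G.neighborFinset x := by
      ext y; simp only [mem_nbF, Finset.mem_singleton, exists_eq_left, mem_neighborFinset]
      exact ⟨fun h => h.1, fun h => ⟨h, h.ne'⟩⟩
    rw [h2, card_neighborFinset_eq_degree] at hXk
    have := hdeg x
    omega
  obtain ⟨x, hx⟩ := hX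
  obtain ⟨t, ht⟩ := nbF_nonempty hconn (G := G) ⟨x, hx⟩
  obtain ⟨α, hα⟩ := htrans x t
  set X' := X.image α with hX'
  have ht' : t ∈ X' := Finset.mem_image.2 ⟨x, hx, hα⟩
  have hX'n : X'.card = n := by rw [hX', Finset.card_image_of_injective _ α.injective, hXn]
  have hX'k : (nbF G X').card = k := by
    rw [hX', nbF_image, Finset.card_image_of_injective _ α.injective, hXk]
  obtain ⟨⟨x0, hx0, hadj⟩, htX⟩ := mem_nbF.1 ht
  have hdis : ∀ y, y ∈ X → y ∈ X' → False := by
    intro y hy hy'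
    have h1 : (X ∩ X').Nonempty := ⟨y, Finset.mem_inter.2 ⟨hy, hy'⟩⟩
    have h2 : (X ∩ X').card < n := by
      have h3 : (X ∩ X').card ≤ X'.card := Finset.card_le_card Finset.inter_subset_right
      rcases Nat.lt_or_ge (X ∩ X').card n with h4 | h4
      · exact h4
      · exfalso
        have := Finset.eq_of_subset_of_card_le (Finset.inter_subset_right : X ∩ X' ⊆ X') (by omega)
        rw [← this] at ht'
        exact htX (Finset.mem_inter.1 ht').1
    have h3 := hnmin _ h1 h2
    have h4 := hkmin (X ∪ X') ⟨y, Finset.mem_union_left _ hy⟩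
    have h5 := nbF_sub (G := G) X X'
    omega
  set T := nbF G X with hT
  set T' := nbF G X' with hT'
  have hx0T' : x0 ∈ T' := mem_nbF.2 ⟨⟨t, ht', hadj.symm⟩, fun h => hdis _ hx0 h⟩
  have s1 : nbF G (X \ T') ⊆ (X ∩ T') ∪ (T \ X') := by
    intro y hy
    obtain ⟨⟨z, hz, hzy⟩, hy⟩ := mem_nbF.1 hy
    simp only [Finset.mem_sdiff, Finset.mem_union, Finset.mem_inter] at *
    by_cases hyX : y ∈ X
    · left; exact ⟨hyX, by tauto⟩
    · right
      refine ⟨mem_nbF.2 ⟨⟨z, hz.1, hzy⟩, hyX⟩, fun h => hz.2 (mem_nbF.2 ⟨⟨y, h, hzy.symm⟩, fun h => hdis _ hz.1 h⟩)⟩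
  have s2 : nbF G (X' \ T) ⊆ (X' ∩ T) ∪ (T' \ X) := by
    intro y hy
    obtain ⟨⟨z, hz, hzy⟩, hy⟩ := mem_nbF.1 hy
    simp only [Finset.mem_sdiff, Finset.mem_union, Finset.mem_inter] at *
    by_cases hyX : y ∈ X'
    · left; exact ⟨hyX, by tauto⟩
    · right
      refine ⟨mem_nbF.2 ⟨⟨z, hz.1, hzy⟩, hyX⟩, fun h => hz.2 (mem_nbF.2 ⟨⟨y, h, hzy.symm⟩, fun h => hdis _ h hz.1⟩)⟩
  have c1 := (Finset.card_le_card s1).trans (Finset.card_union_le _ _)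
  have c2 := (Finset.card_le_card s2).trans (Finset.card_union_le _ _)
  have e1 : (X' ∩ T).card + (T \ X').card = k := by
    rw [← hXk, Finset.inter_comm]; exact Finset.card_inter_add_card_sdiff _ _
  have e2 : (X ∩ T').card + (T' \ X).card = k := by
    rw [← hX'k, Finset.inter_comm]; exact Finset.card_inter_add_card_sdiff _ _
  have l1 : (X \ T').card < n := by
    rw [← hXn]
    exact Finset.card_lt_card ⟨Finset.sdiff_subset, fun h => (Finset.mem_sdiff.1 (h hx0)).2 hx0T'⟩
  have l2 : (X' \ T).card < n := by
    rw [← hX'n]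
    exact Finset.card_lt_card ⟨Finset.sdiff_subset, fun h => (Finset.mem_sdiff.1 (h ht')).2 ht⟩
  have both : X ⊆ T' → X' ⊆ T → False := by
    intro h1 h2
    have h3 : X = T' := Finset.eq_of_subset_of_card_le h1 (by omega)
    have h4 : X' = T := Finset.eq_of_subset_of_card_le h2 (by omega)
    obtain ⟨y, hy⟩ := nbF_nonempty hconn (G := G) (X := X ∪ X') ⟨x, Finset.mem_union_left _ hx⟩
    obtain ⟨⟨z, hz, hzy⟩, hy⟩ := mem_nbF.1 hy
    rw [Finset.mem_union, not_or] at hy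
    rcases Finset.mem_union.1 hz with hz | hz
    · apply hy.2
      rw [h4]; exact mem_nbF.2 ⟨⟨z, hz, hzy⟩, hy.1⟩
    · apply hy.1
      rw [h3]; exact mem_nbF.2 ⟨⟨z, hz, hzy⟩, hy.2⟩
  by_cases b1 : X ⊆ T'
  · refine both b1 ?_
    have h3 : X = T' := Finset.eq_of_subset_of_card_le b1 (by omega)
    rw [← Finset.sdiff_eq_empty_iff_subset]
    by_contra b2
    have h4 := hnmin _ (Finset.nonempty_iff_ne_empty.2 b2) l2
    have h5 : T' \ X = ∅ := by rw [← h3]; simp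
    have h6 : (X' ∩ T).card ≤ k := by omega
    rw [h5, Finset.card_empty] at c2
    omega
  · by_cases b2 : X' ⊆ T
    · have h3 : X' = T := Finset.eq_of_subset_of_card_le b2 (by omega)
      have h4 := hnmin _ (Finset.nonempty_iff_ne_empty.2 (fun h => b1 (Finset.sdiff_eq_empty_iff_subset.1 h))) l1
      have h5 : T \ X' = ∅ := by rw [← h3]; simp
      have h6 : (X ∩ T').card ≤ k := by omega
      rw [h5, Finset.card_empty] at c1
      omega
    · have h3 := hnmin _ (Finset.nonempty_iff_ne_empty.2 (fun h => b1 (Finset.sdiff_eq_empty_iff_subset.1 h))) l1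
      have h4 := hnmin _ (Finset.nonempty_iff_ne_empty.2 (fun h => b2 (Finset.sdiff_eq_empty_iff_subset.1 h))) l2
      omega


/-- Three attachments of a connected set that does not dominate the graph. -/
theorem sep_three (htrans : ∀ u v : V, ∃ α : G ≃g G, α u = v) (hone : OneEnded G)
    (hconn : Conn G (Set.univ : Set V)) [Infinite V] (hdeg : ∀ v, 3 ≤ G.degree v)
    (R N : Set V) (hR : Conn G R) (r : V) (hr : r ∈ R)
    (hN : ∀ x ∈ R, ∀ y, G.Adj x y → y ∉ R → y ∈ N) (hN' : ∀ y ∈ N, y ∉ R)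
    (q : V) (hq : q ∉ R) (hq' : q ∉ N) :
    ∃ a ∈ N, ∃ b ∈ N, ∃ c ∈ N, a ≠ b ∧ a ≠ c ∧ b ≠ c := by
  classical
  by_contra hcon
  have hfin : N.Finite ∧ N.ncard ≤ 2 := by
    by_contra h
    apply hcon
    have : 2 < N.encard := by
      by_contra h2
      rw [not_lt] at h2
      have hf : N.Finite := Set.finite_of_encard_le_coe h2
      refine h ⟨hf, ?_⟩
      rw [← hf.cast_ncard_eq] at h2
      exact_mod_cast h2
    obtain ⟨t, ht, h3⟩ := Set.exists_subset_encard_eq (k := 3) (s := N) (by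
      have := Order.add_one_le_of_lt this
      norm_num at this
      exact this)
    obtain ⟨a, b, c, h1, h2, h4, rfl⟩ := Set.encard_eq_three.1 h3
    exact ⟨a, ht (by simp), b, ht (by simp), c, ht (by simp), h1, h2, h4⟩
  obtain ⟨hf, hc⟩ := hfin
  have key : ∀ Q : Set V, Q.Nonempty → Q.Finite → (∀ x ∈ Q, ∀ y, G.Adj x y → y ∉ Q → y ∈ N) →
      False := by
    intro Q hQ hQf h
    have h1 := nb_three htrans hconn hdeg hQf.toFinset (by simpa using hQ)
    have h2 : nbF G hQf.toFinset ⊆ hf.toFinset := by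
      intro y hy
      obtain ⟨⟨x, hx, hxy⟩, hy⟩ := mem_nbF.1 hy
      rw [Set.Finite.mem_toFinset] at *
      exact h x hx y hxy hy
    have h3 := Finset.card_le_card h2
    rw [Set.ncard_eq_toFinset_card N hf] at hc
    omega
  have hRinf : R.Infinite := fun h => key R ⟨r, hr⟩ h hN
  have hQinf : {w | Rch G Nᶜ q w}.Infinite := fun h => key _ ⟨q, .refl hq'⟩ h (by
    intro x hx y hxy hy
    by_contra hyN
    exact hy (Rch.step hx hxy hyN))
  have hK : ((hf.toFinset : Finset V) : Set V) = N := by simp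
  have := one_end_unique hone hf.toFinset (u := r) (v := q) (by
    rw [hK]
    refine hRinf.mono fun w hw => (hR r hr w hw).mono fun y hy hyN => hN' y hyN hy) (by
    rw [hK]; exact hQinf)
  rw [hK] at this
  refine hq (this.inv (fun w => w ∈ R) hr ?_)
  intro x y hx _ hy hxy
  by_contra hyR
  exact hy (hN x hx y hxy hyR)

end Sep

/-! ### Theta configurations -/

section Disc

variable {V : Type*} {G : SimpleGraph V}

structure Theta (G : SimpleGraph V) (U : Set V) (a b c : V) (A B J X N : Set V) : Prop where
  cA : Conn G A
  cB : Conn G B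
  cJ : Conn G J
  cX : Conn G X
  cN : Conn G N
  aA : a ∈ A
  bB : b ∈ B
  cJ' : c ∈ J
  sA : A ⊆ insert a U
  sB : B ⊆ insert b U
  sJ : J ⊆ insert c U
  sX : X ⊆ U
  sN : N ⊆ U
  tAX : Touch G A X
  tBX : Touch G B X
  tJX : Touch G J X
  tAN : Touch G A N
  tBN : Touch G B N
  tJN : Touch G J N
  dAB : Disjoint A B
  dAJ : Disjoint A J
  dAX : Disjoint A X
  dAN : Disjoint A N
  dBJ : Disjoint B J
  dBX : Disjoint B X
  dBN : Disjoint B N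
  dJX : Disjoint J X
  dJN : Disjoint J N
  dXN : Disjoint X N

/-- Vertices reachable from `a` by stepping into `S`. -/
def Att (G : SimpleGraph V) (a : V) (S : Set V) : Set V := {w | ∃ u, G.Adj a u ∧ Rch G S u w}

def Linked (G : SimpleGraph V) (a b : V) (S : Set V) : Prop :=
  ∃ u v, G.Adj a u ∧ G.Adj b v ∧ Rch G S u v

theorem Linked.of_att {a b w : V} {S : Set V} (h1 : w ∈ Att G a S) (h2 : w ∈ Att G b S) :
    Linked G a b S := by
  obtain ⟨u, hu, h⟩ := h1
  obtain ⟨v, hv, h'⟩ := h2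
  exact ⟨u, v, hu, hv, h.trans h'.symm⟩

theorem Linked.symm {a b : V} {S : Set V} (h : Linked G a b S) : Linked G b a S := by
  obtain ⟨u, v, hu, hv, h⟩ := h
  exact ⟨v, u, hv, hu, h.symm⟩

theorem Att.sub {a : V} {S : Set V} : Att G a S ⊆ S := fun _ ⟨_, _, h⟩ => h.mem_right

theorem Att.step {a p q : V} {S : Set V} (h : p ∈ insert a (Att G a S)) (hpq : G.Adj p q)
    (hq : q ∈ S) : q ∈ Att G a S := by
  rcases h with rfl | ⟨u, hu, h⟩
  · exact ⟨q, hpq, .refl hq⟩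
  · exact ⟨u, hu, .step h hpq hq⟩

theorem Att.conn (a : V) (S : Set V) : Conn G (insert a (Att G a S)) := by
  refine conn_of_center a ?_
  rintro w (rfl | ⟨u, hu, h⟩)
  · exact .refl (Or.inl rfl)
  · refine Rch.trans (.step (.refl (Or.inl rfl)) hu (Or.inr ⟨u, hu, .refl h.mem_left⟩))
      (h.self.mono ?_)
    intro y hy
    exact Or.inr ⟨u, hu, hy⟩

theorem between {T A B : Set V} {a b u v : V} (h : Rch G T u v) (ha : a ∈ A) (hau : G.Adj a u)
    (hb : b ∈ B) (hbv : G.Adj b v) (huB : u ∉ B) (hvA : v ∉ A)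
    (hAB : ∀ y ∈ A, y ∈ T → ∀ z ∈ B, z ∈ T → ¬ G.Adj y z) :
    ∃ n w, Rch G (T \ (A ∪ B)) n w ∧ (∃ p ∈ A, G.Adj p n) ∧ (∃ q ∈ B, G.Adj w q) := by
  by_contra hcon
  have key : v ∈ A ∨ ∃ n, (∃ p ∈ A, G.Adj p n) ∧ Rch G (T \ (A ∪ B)) n v := by
    refine h.inv (fun y => y ∈ A ∨ ∃ n, (∃ p ∈ A, G.Adj p n) ∧ Rch G (T \ (A ∪ B)) n y) ?_ ?_
    · by_cases hu : u ∈ A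
      · exact Or.inl hu
      · exact Or.inr ⟨u, ⟨a, ha, hau⟩, .refl ⟨h.mem_left, fun h => h.elim hu huB⟩⟩
    · intro y z hy hyT hzT hyz
      by_cases hzA : z ∈ A
      · exact Or.inl hzA
      right
      rcases hy with hy | ⟨n, hn, hy⟩
      · exact ⟨z, ⟨y, hy, hyz⟩, .refl ⟨hzT, fun h => h.elim hzA
          fun hzB => hAB y hy hyT z hzB hzT hyz⟩⟩
      · refine ⟨n, hn, .step hy hyz ⟨hzT, fun h => h.elim hzA fun hzB => ?_⟩⟩
        exact hcon ⟨n, y, hy, hn, z, hzB, hyz⟩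
  rcases key with h | ⟨n, hn, h⟩
  · exact hvA h
  · exact hcon ⟨n, v, h, hn, b, hb, hbv.symm⟩

theorem Linked.hit {a b x : V} {S : Set V} (h : Linked G a b S)
    (hn : ¬ Linked G a b (S \ {x})) : ∃ p ∈ insert a (Att G a (S \ {x})), G.Adj p x := by
  obtain ⟨u, v, hu, hv, h⟩ := h
  by_cases hux : u = x
  · exact ⟨a, Or.inl rfl, hux ▸ hu⟩
  rcases h.sep {x} hux with h | ⟨p, q, h, rfl, -, hpq⟩
  · exact absurd ⟨u, v, hu, hv, h⟩ hn
  · exact ⟨p, Or.inr ⟨u, hu, h⟩, hpq⟩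

theorem disc_theta {C K1 K2 : Set V} {a b c x j : V} (haC : a ∉ C) (hbC : b ∉ C) (hcC : c ∉ C)
    (hab : a ≠ b) (hac : a ≠ c) (hbc : b ≠ c)
    (h1 : K1 ⊆ insert c C) (h1c : Conn G K1) (h1l : Linked G a b (C \ K1))
    (c1 : c ∈ K1) (c2 : c ∈ K2)
    (h2 : K2 ⊆ insert c C) (h2l : Linked G a b (C \ K2))
    (hx2 : x ∈ K2) (hx1 : x ∉ K1) (hj : Rch G (K1 ∩ K2) c j) (hjx : G.Adj j x)
    (hmax : ¬ Linked G a b ((C \ K1) \ {x})) :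
    ∃ A B J X N, Theta G C a b c A B J X N := by
  have hxC : x ∈ C := by
    rcases h2 hx2 with h | h
    · exact absurd (h ▸ c1) hx1
    · exact h
  have haK1 : a ∉ K1 := fun h => (h1 h).elim hac haC
  have hbK1 : b ∉ K1 := fun h => (h1 h).elim hbc hbC
  have tA := h1l.hit hmax
  have tB := h1l.symm.hit (fun h => hmax h.symm)
  set S' := (C \ K1) \ {x} with hS'
  have hAC : Att G a S' ⊆ C := fun y hy => (Att.sub hy).1.1
  have hBC : Att G b S' ⊆ C := fun y hy => (Att.sub hy).1.1
  have dAB : Disjoint (insert a (Att G a S')) (insert b (Att G b S')) := by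
    rw [Set.disjoint_left]
    rintro y (rfl | hy) (rfl | hy')
    · exact hab rfl
    · exact haC (hBC hy')
    · exact hbC (hAC hy)
    · exact hmax (.of_att hy hy')
  obtain ⟨u, v, hu, hv, huv⟩ := h2l
  have huC := huv.mem_left
  have hvC := huv.mem_right
  obtain ⟨n, w, hnw, ⟨p, hp, hpn⟩, ⟨q, hq, hwq⟩⟩ := between huv
    (A := insert a (Att G a S')) (B := insert b (Att G b S')) (Or.inl rfl) hu (Or.inl rfl) hv
    (by
      rintro (rfl | h)
      · exact hbC huC.1
      · exact Set.disjoint_left.1 dAB (Or.inr (Att.step (Or.inl rfl) hu (Att.sub h))) (Or.inr h))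
    (by
      rintro (rfl | h)
      · exact haC hvC.1
      · exact Set.disjoint_left.1 dAB (Or.inr h) (Or.inr (Att.step (Or.inl rfl) hv (Att.sub h))))
    (by
      intro y hy hyT z hz hzT hyz
      rcases hz with rfl | hz
      · exact hbC hzT.1
      · exact Set.disjoint_left.1 dAB (Or.inr (Att.step hy hyz (Att.sub hz))) (Or.inr hz))
  set A := insert a (Att G a S') with hA
  set B := insert b (Att G b S') with hB
  set T := C \ K2 with hT
  have hnT := hnw.mem_left
  have hn1 : n ∈ K1 := by
    by_contra hn1
    exact hnT.2 (Or.inl (Or.inr (Att.step hp hpn ⟨⟨hnT.1.1, hn1⟩, fun h => hnT.1.2 (h ▸ hx2)⟩)))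
  set N := {y | Rch G (T \ (A ∪ B)) n y} with hN
  have hNT : ∀ y ∈ N, y ∈ T \ (A ∪ B) := fun y hy => Rch.mem_right hy
  have hnN : n ∈ N := .refl hnT
  have hcN : c ∉ N := fun h => hcC (hNT c h).1.1
  have hAK1 : ∀ y ∈ A, y ∉ K1 := by
    rintro y (rfl | hy)
    · exact haK1
    · exact (Att.sub hy).1.2
  have hBK1 : ∀ y ∈ B, y ∉ K1 := by
    rintro y (rfl | hy)
    · exact hbK1
    · exact (Att.sub hy).1.2
  have hJK : ∀ y ∈ {y | Rch G (K1 \ N) c y}, y ∈ K1 \ N := fun y hy => Rch.mem_right hy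
  refine ⟨A, B, {y | Rch G (K1 \ N) c y}, {x}, N, ?_⟩
  exact
    { cA := Att.conn _ _
      cB := Att.conn _ _
      cJ := conn_comp _ _ _
      cX := conn_singleton _
      cN := conn_comp _ _ _
      aA := Or.inl rfl
      bB := Or.inl rfl
      cJ' := .refl ⟨c1, hcN⟩
      sA := Set.insert_subset_insert hAC
      sB := Set.insert_subset_insert hBC
      sJ := fun y hy => h1 (hJK y hy).1
      sX := by rintro y rfl; exact hxC
      sN := fun y hy => (hNT y hy).1.1
      tAX := by obtain ⟨p, hp, h⟩ := tA; exact ⟨p, hp, x, rfl, h⟩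
      tBX := by obtain ⟨p, hp, h⟩ := tB; exact ⟨p, hp, x, rfl, h⟩
      tJX := ⟨j, hj.mono (fun y hy => ⟨hy.1, fun h => (hNT y h).1.2 hy.2⟩), x, rfl, hjx⟩
      tAN := ⟨p, hp, n, hnN, hpn⟩
      tBN := ⟨q, hq, w, hnw, hwq.symm⟩
      tJN := by
        rcases (h1c c c1 n hn1).sep N hcN with h | ⟨p, q, h, hq, _, hpq⟩
        · exact absurd hnN h.mem_right.2
        · exact ⟨p, h, q, hq, hpq⟩
      dAB := dAB
      dAJ := Set.disjoint_left.2 fun y hy hy' => hAK1 y hy (hJK y hy').1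
      dAX := by
        rw [Set.disjoint_singleton_right]
        rintro (rfl | h)
        · exact haC hxC
        · exact (Att.sub h).2 rfl
      dAN := Set.disjoint_left.2 fun y hy hy' => (hNT y hy').2 (Or.inl hy)
      dBJ := Set.disjoint_left.2 fun y hy hy' => hBK1 y hy (hJK y hy').1
      dBX := by
        rw [Set.disjoint_singleton_right]
        rintro (rfl | h)
        · exact hbC hxC
        · exact (Att.sub h).2 rfl
      dBN := Set.disjoint_left.2 fun y hy hy' => (hNT y hy').2 (Or.inr hy)
      dJX := by
        rw [Set.disjoint_singleton_right]
        exact fun h => hx1 (hJK x h).1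
      dJN := Set.disjoint_left.2 fun y hy hy' => (hJK y hy).2 hy'
      dXN := by
        rw [Set.disjoint_singleton_left]
        exact fun h => (hNT x h).1.2 hx2 }

theorem Att.map {a : V} {S : Set V} (α : G ≃g G) (ha : α a = a) :
    Att G a (α '' S) = α '' Att G a S := by
  ext w
  constructor
  · rintro ⟨u, hu, h⟩
    refine ⟨α.symm w, ⟨α.symm u, ?_, ?_⟩, by simp⟩
    · rw [← α.map_adj_iff]; simpa [ha] using hu
    · have := h.map α.symm
      rwa [Set.image_image, show (fun x => α.symm (α x)) '' S = S by simp] at this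
  · rintro ⟨w, ⟨u, hu, h⟩, rfl⟩
    exact ⟨α u, by rw [← α.map_adj_iff, ha] at hu; exact hu, h.map α⟩

theorem Linked.map {a b : V} {S : Set V} (α : G ≃g G) (ha : α a = a) (hb : α b = b)
    (h : Linked G a b S) : Linked G a b (α '' S) := by
  obtain ⟨u, v, hu, hv, h⟩ := h
  refine ⟨α u, α v, ?_, ?_, h.map α⟩
  · rw [← α.map_adj_iff, ha] at hu; exact hu
  · rw [← α.map_adj_iff, hb] at hv; exact hv

theorem disc (C : Set V) (hC : C.Finite) (cC : Conn G C) (α : G ≃g G) (hα : α '' C = C)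
    (hfix : ∀ x ∈ C, α x ≠ x) (a b c : V) (haC : a ∉ C) (hbC : b ∉ C) (hcC : c ∉ C)
    (hab : a ≠ b) (hac : a ≠ c) (hbc : b ≠ c) (fa : α a = a) (fb : α b = b) (fc : α c = c)
    (na : ∃ u ∈ C, G.Adj a u) (nb : ∃ u ∈ C, G.Adj b u) (nc : ∃ u ∈ C, G.Adj c u) :
    ∃ A B J X N, Theta G C a b c A B J X N := by
  by_contra hcon
  obtain ⟨u0, hu0, hau0⟩ := na
  obtain ⟨v0, hv0, hbv0⟩ := nb
  obtain ⟨z0, hz0, hcz0⟩ := nc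
  set F : Set (Set V) := {K | c ∈ K ∧ K ⊆ insert c C ∧ Conn G K ∧ Linked G a b (C \ K)} with hF
  have hFfin : F.Finite := (hC.insert c).finite_subsets.subset fun K hK => hK.2.1
  have hFne : F.Nonempty := by
    refine ⟨{c}, rfl, by simp, conn_singleton c, u0, v0, hau0, hbv0, ?_⟩
    rw [Set.sdiff_singleton_eq_self hcC]
    exact cC _ hu0 _ hv0
  obtain ⟨K1, hK1, hmax'⟩ := hFfin.exists_maximal hFne
  obtain ⟨c1, h1, h1c, h1l⟩ := hK1
  have hmax : ∀ x ∈ C, x ∉ K1 → ∀ j ∈ K1, G.Adj j x → ¬ Linked G a b ((C \ K1) \ {x}) := by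
    intro x hx hxK j hj hjx hl
    have h2 : insert x K1 ∈ F := by
      refine ⟨Or.inr c1, Set.insert_subset (Or.inr hx) h1, ?_, ?_⟩
      · have := (conn_singleton x).union_touch h1c ⟨x, rfl, j, hj, hjx.symm⟩
        rwa [Set.singleton_union] at this
      · rwa [Set.sdiff_sdiff, Set.union_singleton] at hl
    exact hxK (hmax' h2 (Set.subset_insert _ _) (Or.inl rfl))
  have hsub : ∀ K2 ∈ F, K2 ⊆ K1 := by
    rintro K2 ⟨c2, h2, h2c, h2l⟩ y hy
    by_contra hyK
    rcases (h2c c c2 y hy).sep K1ᶜ (by simpa using c1) with h | ⟨p, q, h, hq, hq2, hpq⟩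
    · exact h.mem_right.2 hyK
    · have h' : Rch G (K1 ∩ K2) c p := h.mono fun z hz => ⟨not_not.1 hz.2, hz.1⟩
      have hqC : q ∈ C := (h2 hq2).elim (fun e => absurd (e ▸ c1) hq) id
      exact hcon (disc_theta haC hbC hcC hab hac hbc h1 h1c h1l c1 c2 h2 h2l hq2 hq h' hpq
        (hmax q hqC hq p h'.mem_right.1 hpq))
  have hK1fin : K1.Finite := (hC.insert c).subset h1
  have hαK : α '' K1 = K1 := by
    refine Set.eq_of_subset_of_ncard_le (hsub _ ⟨⟨c, c1, fc⟩, ?_, h1c.map α, ?_⟩) ?_ hK1fin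
    · calc α '' K1 ⊆ α '' (insert c C) := Set.image_mono h1
        _ = insert c C := by rw [Set.image_insert_eq, hα, fc]
    · have := h1l.map α fa fb
      rwa [Set.image_sdiff α.injective, hα] at this
    · rw [Set.ncard_image_of_injective _ α.injective]
  set S := C \ K1 with hS
  have hαS : α '' S = S := by rw [hS, Set.image_sdiff α.injective, hα, hαK]
  obtain ⟨x, hxC, hxK, j, hj, hjx⟩ : ∃ x, x ∈ C ∧ x ∉ K1 ∧ ∃ j ∈ K1, G.Adj j x := by
    by_cases hz : z0 ∈ K1
    · obtain ⟨u, v, _, _, h⟩ := h1l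
      have hu := h.mem_left
      rcases (cC z0 hz0 u hu.1).sep K1ᶜ (by simpa using hz) with h | ⟨p, q, h, hq, hq2, hpq⟩
      · exact absurd hu.2 h.mem_right.2
      · exact ⟨q, hq2, hq, p, not_not.1 h.mem_right.2, hpq⟩
    · exact ⟨z0, hz0, hz, c, c1, hcz0⟩
  have step : ∀ a b : V, Linked G a b S → ∀ x ∈ S, ∀ x' ∈ S, x ≠ x' →
      ¬ Linked G a b (S \ {x}) → x ∈ Att G a (S \ {x'}) ∨ x' ∈ Att G a (S \ {x}) := by
    rintro a b ⟨u, v, hu, hv, h⟩ x hx x' hx' hne hnl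
    by_cases hux : u = x
    · subst hux; exact Or.inl ⟨u, hu, .refl ⟨hx, hne⟩⟩
    by_cases hux' : u = x'
    · subst hux'; exact Or.inr ⟨u, hu, .refl ⟨hx', hne.symm⟩⟩
    rcases h.sep {x, x'} (by simp [hux, hux']) with h | ⟨p, q, h, hq, hqS, hpq⟩
    · exact absurd ⟨u, v, hu, hv, h.mono (fun y hy => ⟨hy.1, fun e => hy.2 (Or.inl e)⟩)⟩ hnl
    · rcases hq with rfl | rfl
      · exact Or.inl ⟨u, hu, .step (h.mono (fun y hy => ⟨hy.1, fun e => hy.2 (Or.inr e)⟩)) hpq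
          ⟨hx, hne⟩⟩
      · exact Or.inr ⟨u, hu, .step (h.mono (fun y hy => ⟨hy.1, fun e => hy.2 (Or.inl e)⟩)) hpq
          ⟨hx', hne.symm⟩⟩
  have lt : ∀ x ∈ S, ∀ x' ∈ S, x ≠ x' → ¬ Linked G a b (S \ {x}) → ¬ Linked G a b (S \ {x'}) →
      x ∈ Att G a (S \ {x'}) → (Att G a (S \ {x})).ncard < (Att G a (S \ {x'})).ncard := by
    intro x hx x' hx' hne hn hn' h
    have h2 : x ∉ Att G b (S \ {x'}) := fun h' => hn' (.of_att h h')
    have h3 : x' ∈ Att G b (S \ {x}) :=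
      (step b a h1l.symm x hx x' hx' hne (fun h => hn h.symm)).resolve_left h2
    have h4 : x' ∉ Att G a (S \ {x}) := fun h' => hn (.of_att h' h3)
    refine Set.ncard_lt_ncard ⟨?_, fun h5 => (Att.sub (h5 h)).2 rfl⟩
      (hC.subset fun y hy => (Att.sub hy).1.1)
    rintro w ⟨u, hu, hw⟩
    refine ⟨u, hu, hw.self.mono ?_⟩
    intro y hy
    exact ⟨(Rch.mem_right hy).1, fun e => h4 ⟨u, hu, by rw [Set.mem_singleton_iff] at e; exact e ▸ hy⟩⟩
  have hxS : x ∈ S := ⟨hxC, hxK⟩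
  have hxS' : α x ∈ S := by rw [← hαS]; exact ⟨x, hxS, rfl⟩
  have hn := hmax x hxC hxK j hj hjx
  have hn' := hmax (α x) hxS'.1 hxS'.2 (α j) (by rw [← hαK]; exact ⟨j, hj, rfl⟩)
    (α.map_adj_iff.2 hjx)
  have hcard : (Att G a (S \ {α x})).ncard = (Att G a (S \ {x})).ncard := by
    have : S \ {α x} = α '' (S \ {x}) := by
      rw [Set.image_sdiff α.injective, hαS, Set.image_singleton]
    rw [this, Att.map α fa, Set.ncard_image_of_injective _ α.injective]
  have hne := hfix x hxC
  rcases step a b h1l x hxS (α x) hxS' hne.symm hn with h | h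
  · have := lt x hxS (α x) hxS' hne.symm hn hn' h
    omega
  · have := lt (α x) hxS' x hxS hne hn' hn h
    omega

end Disc

/-! ### An automorphism fixing a face boundary pointwise is trivial -/

section Fin

variable {V : Type*} {G : SimpleGraph V}

theorem Theta.mono {U U' : Set V} {a b c : V} {A B J X N : Set V} (h : Theta G U a b c A B J X N)
    (hU : U ⊆ U') : Theta G U' a b c A B J X N :=
  { h with
    sA := h.sA.trans (Set.insert_subset_insert hU)
    sB := h.sB.trans (Set.insert_subset_insert hU)
    sJ := h.sJ.trans (Set.insert_subset_insert hU)
    sX := h.sX.trans hU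
    sN := h.sN.trans hU }

theorem Theta.rot {U : Set V} {a b c : V} {A B J X N : Set V} (h : Theta G U a b c A B J X N) :
    Theta G U b c a B J A X N :=
  { h with
    cA := h.cB, cB := h.cJ, cJ := h.cA, aA := h.bB, bB := h.cJ', cJ' := h.aA
    sA := h.sB, sB := h.sJ, sJ := h.sA
    tAX := h.tBX, tBX := h.tJX, tJX := h.tAX
    tAN := h.tBN, tBN := h.tJN, tJN := h.tAN
    dAB := h.dBJ, dAJ := h.dAB.symm, dAX := h.dBX, dAN := h.dBN
    dBJ := h.dAJ.symm, dBX := h.dJX, dBN := h.dJN, dJX := h.dAX, dJN := h.dAN }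

/-- Balls around a vertex. -/
def bl (G : SimpleGraph V) (s : V) : ℕ → Set V
  | 0 => {s}
  | n + 1 => bl G s n ∪ ⋃ x ∈ bl G s n, G.neighborSet x

theorem bl_fin [G.LocallyFinite] (s : V) (n : ℕ) : (bl G s n).Finite := by
  induction n with
  | zero => exact Set.finite_singleton s
  | succ n ih => exact ih.union (ih.biUnion fun x _ => Set.toFinite _)

theorem bl_mono (s : V) : Monotone (bl G s) :=
  monotone_nat_of_le_succ fun _ => Set.subset_union_left

theorem bl_map (s : V) (α : G ≃g G) (hs : α s = s) (n : ℕ) : ∀ x ∈ bl G s n, α x ∈ bl G s n := by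
  induction n with
  | zero => rintro x rfl; exact hs
  | succ n ih =>
    rintro x (hx | hx)
    · exact Or.inl (ih x hx)
    · right
      simp only [Set.mem_iUnion] at hx ⊢
      obtain ⟨y, hy, hyx⟩ := hx
      exact ⟨α y, ih y hy, α.map_adj_iff.2 hyx⟩

theorem bl_exists (hconn : Conn G (Set.univ : Set V)) (s x : V) : ∃ n, x ∈ bl G s n := by
  refine (hconn s trivial x trivial).inv (fun x => ∃ n, x ∈ bl G s n) ⟨0, rfl⟩ ?_
  rintro y z ⟨n, hn⟩ _ _ h
  refine ⟨n + 1, Or.inr ?_⟩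
  simp only [Set.mem_iUnion]
  exact ⟨y, hn, h⟩

theorem bl_rch (hconn : Conn G (Set.univ : Set V)) (s : V) {C : Set V} {y x : V}
    (h : Rch G C y x) : ∃ n, ∀ m ≥ n, Rch G (C ∩ bl G s m) y x := by
  induction h with
  | refl h =>
    obtain ⟨n, hn⟩ := bl_exists hconn s y
    exact ⟨n, fun m hm => .refl ⟨h, bl_mono s hm hn⟩⟩
  | @step v w _ ha hw ih =>
    obtain ⟨n, hn⟩ := bl_exists hconn s w
    obtain ⟨n', hn'⟩ := ih
    exact ⟨max n n', fun m hm => .step (hn' m (le_trans (le_max_right _ _) hm)) ha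
      ⟨hw, bl_mono s (le_trans (le_max_left _ _) hm) hn⟩⟩

theorem theta_of_aut [G.LocallyFinite] (hconn : Conn G (Set.univ : Set V)) (α : G ≃g G) (y : V)
    (C : Set V) (hC : C = {w | Rch G {x | α x ≠ x} y w}) (hy : α y ≠ y)
    (a b c : V) (hab : a ≠ b) (hac : a ≠ c) (hbc : b ≠ c)
    (fa : α a = a) (fb : α b = b) (fc : α c = c)
    (na : ∃ u ∈ C, G.Adj a u) (nb : ∃ u ∈ C, G.Adj b u) (nc : ∃ u ∈ C, G.Adj c u) :
    ∃ A B J X N, Theta G (C ∪ α '' C) a b c A B J X N := by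
  have hmov : ∀ x ∈ C, α x ≠ x := by
    intro x hx; rw [hC] at hx; exact Rch.mem_right hx
  have hyC : y ∈ C := by rw [hC]; exact .refl hy
  have cC : Conn G C := by rw [hC]; exact conn_comp _ _ _
  have himg : ∀ w ∈ C, Rch G {x | α x ≠ x} (α y) (α w) := by
    intro w hw
    rw [hC] at hw
    refine (Rch.map α hw).mono ?_
    rintro _ ⟨x, hx, rfl⟩
    exact fun h => hx (α.injective h)
  have hmov' : ∀ x ∈ α '' C, α x ≠ x := by
    rintro _ ⟨x, hx, rfl⟩
    exact (himg x hx).mem_right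
  by_cases hαy : α y ∈ C
  · have hαC : ∀ w ∈ C, α w ∈ C := by
      intro w hw
      have h1 := himg w hw
      rw [hC] at hαy ⊢
      exact Rch.trans hαy h1
    obtain ⟨ua, hua, hadja⟩ := na
    obtain ⟨ub, hub, hadjb⟩ := nb
    obtain ⟨uc, huc, hadjc⟩ := nc
    obtain ⟨n1, h1⟩ := bl_rch hconn a (cC y hyC _ hαy)
    obtain ⟨n2, h2⟩ := bl_rch hconn a (cC y hyC _ hua)
    obtain ⟨n3, h3⟩ := bl_rch hconn a (cC y hyC _ hub)
    obtain ⟨n4, h4⟩ := bl_rch hconn a (cC y hyC _ huc)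
    set n := n1 + n2 + n3 + n4
    replace h1 := h1 n (by omega)
    replace h2 := h2 n (by omega)
    replace h3 := h3 n (by omega)
    replace h4 := h4 n (by omega)
    set C' := {w | Rch G (C ∩ bl G a n) y w} with hC'
    have hsub : ∀ w ∈ C', w ∈ C ∩ bl G a n := fun w hw => Rch.mem_right hw
    have hfin : C'.Finite := (bl_fin (G := G) a n).subset fun w hw => (hsub w hw).2
    have hinv : α '' C' = C' := by
      refine Set.eq_of_subset_of_ncard_le ?_ ?_ hfin
      · rintro _ ⟨w, hw, rfl⟩
        refine Rch.trans h1 ((Rch.map α hw).mono ?_)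
        rintro _ ⟨x, hx, rfl⟩
        exact ⟨hαC x hx.1, bl_map a α fa n x hx.2⟩
      · rw [Set.ncard_image_of_injective _ α.injective]
    obtain ⟨A, B, J, X, N, h⟩ := disc C' hfin (conn_comp _ _ _) α hinv
      (fun x hx => hmov x (hsub x hx).1) a b c
      (fun h => hmov a (hsub a h).1 fa) (fun h => hmov b (hsub b h).1 fb)
      (fun h => hmov c (hsub c h).1 fc) hab hac hbc fa fb fc
      ⟨ua, h2, hadja⟩ ⟨ub, h3, hadjb⟩ ⟨uc, h4, hadjc⟩
    exact ⟨A, B, J, X, N, h.mono fun x hx => Or.inl (hsub x hx).1⟩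
  · have hd : Disjoint C (α '' C) := by
      rw [Set.disjoint_left]
      rintro w hw ⟨w', hw', rfl⟩
      apply hαy
      have h1 := himg w' hw'
      rw [hC] at hw ⊢
      exact Rch.trans hw h1.symm
    have t1 : ∀ z, (∃ u ∈ C, G.Adj z u) → Touch G {z} C := by
      rintro z ⟨u, hu, h⟩
      exact ⟨z, rfl, u, hu, h⟩
    have t2 : ∀ z, α z = z → (∃ u ∈ C, G.Adj z u) → Touch G {z} (α '' C) := by
      rintro z hz ⟨u, hu, h⟩
      refine ⟨z, rfl, α u, ⟨u, hu, rfl⟩, ?_⟩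
      rw [← α.map_adj_iff, hz] at h
      exact h
    have n1 : ∀ z, α z = z → Disjoint {z} C := fun z hz =>
      Set.disjoint_singleton_left.2 fun h => hmov z h hz
    have n2 : ∀ z, α z = z → Disjoint {z} (α '' C) := fun z hz =>
      Set.disjoint_singleton_left.2 fun h => hmov' z h hz
    exact ⟨{a}, {b}, {c}, C, α '' C,
      { cA := conn_singleton _, cB := conn_singleton _, cJ := conn_singleton _, cX := cC
        cN := cC.map α, aA := rfl, bB := rfl, cJ' := rfl
        sA := by simp, sB := by simp, sJ := by simp, sX := Set.subset_union_left
        sN := Set.subset_union_right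
        tAX := t1 a na, tBX := t1 b nb, tJX := t1 c nc
        tAN := t2 a fa na, tBN := t2 b fb nb, tJN := t2 c fc nc
        dAB := by simpa using hab, dAJ := by simpa using hac, dBJ := by simpa using hbc
        dAX := n1 a fa, dBX := n1 b fb, dJX := n1 c fc
        dAN := n2 a fa, dBN := n2 b fb, dJN := n2 c fc, dXN := hd }⟩

theorem zlem (emb : PlanarEmbedding G) {U : Set V} {a b c : V} {A B J X N : Set V}
    (h : Theta G U a b c A B J X N) {Fa Fb Fc : Set V}
    (ca : Conn G Fa) (cb : Conn G Fb) (cc : Conn G Fc)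
    (aF : a ∈ Fa) (bF : b ∈ Fb) (cF : c ∈ Fc)
    (tab : Touch G Fa Fb) (tac : Touch G Fa Fc)
    (dab : Disjoint Fa Fb) (dac : Disjoint Fa Fc) (dbc : Disjoint Fb Fc)
    (dUa : Disjoint U Fa) (dUb : Disjoint U Fb) (dUc : Disjoint U Fc)
    {A' : Set V} (cA' : Conn G A') (hA' : A' ⊆ A \ {a}) (ta : Touch G A' {a})
    (tX : Touch G A' X) (tN : Touch G A' N) : False := by
  have hAA : A' ⊆ A := fun x hx => (hA' hx).1
  have hAU : A' ⊆ U := fun x hx => (h.sA (hA' hx).1).resolve_left (hA' hx).2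
  have dBFc : Disjoint B Fc := (Set.disjoint_insert_left.2
    ⟨fun hh => Set.disjoint_left.1 dbc bF hh, dUc⟩).mono_left h.sB
  have dJFb : Disjoint J Fb := (Set.disjoint_insert_left.2
    ⟨fun hh => Set.disjoint_left.1 dbc hh cF, dUb⟩).mono_left h.sJ
  have dBFa : Disjoint B Fa := (Set.disjoint_insert_left.2
    ⟨fun hh => Set.disjoint_left.1 dab hh bF, dUa⟩).mono_left h.sB
  have dJFa : Disjoint J Fa := (Set.disjoint_insert_left.2
    ⟨fun hh => Set.disjoint_left.1 dac hh cF, dUa⟩).mono_left h.sJ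
  refine noK33 emb A' (B ∪ Fb) (J ∪ Fc) X N Fa cA' (h.cB.union_mem cb h.bB bF)
    (h.cJ.union_mem cc h.cJ' cF) h.cX h.cN ca tX tN
    (ta.mono subset_rfl (by simpa using aF))
    (h.tBX.mono Set.subset_union_left subset_rfl) (h.tBN.mono Set.subset_union_left subset_rfl)
    (tab.symm.mono Set.subset_union_right subset_rfl)
    (h.tJX.mono Set.subset_union_left subset_rfl) (h.tJN.mono Set.subset_union_left subset_rfl)
    (tac.symm.mono Set.subset_union_right subset_rfl)
    (Set.disjoint_union_right.2 ⟨h.dAB.mono_left hAA, dUb.mono_left hAU⟩)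
    (Set.disjoint_union_right.2 ⟨h.dAJ.mono_left hAA, dUc.mono_left hAU⟩)
    (h.dAX.mono_left hAA) (h.dAN.mono_left hAA) (dUa.mono_left hAU)
    (Set.disjoint_union_left.2 ⟨Set.disjoint_union_right.2 ⟨h.dBJ, dBFc⟩,
      Set.disjoint_union_right.2 ⟨dJFb.symm, dbc⟩⟩)
    (Set.disjoint_union_left.2 ⟨h.dBX, (dUb.mono_left h.sX).symm⟩)
    (Set.disjoint_union_left.2 ⟨h.dBN, (dUb.mono_left h.sN).symm⟩)
    (Set.disjoint_union_left.2 ⟨dBFa, dab.symm⟩)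
    (Set.disjoint_union_left.2 ⟨h.dJX, (dUc.mono_left h.sX).symm⟩)
    (Set.disjoint_union_left.2 ⟨h.dJN, (dUc.mono_left h.sN).symm⟩)
    (Set.disjoint_union_left.2 ⟨dJFa, dac.symm⟩)
    h.dXN (dUa.mono_left h.sX) (dUa.mono_left h.sN)

/-- Vertices of components of `S` touching `X`. -/
def Abs (G : SimpleGraph V) (X S : Set V) : Set V :=
  {w | ∃ x ∈ X, ∃ u, G.Adj x u ∧ Rch G S u w}

theorem Abs.conn {X S1 S2 S3 : Set V} (hX : Conn G X) (x0 : V) (hx0 : x0 ∈ X) :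
    Conn G (X ∪ (Abs G X S1 ∪ (Abs G X S2 ∪ Abs G X S3))) := by
  refine conn_of_center x0 ?_
  have key : ∀ S, Abs G X S ⊆ X ∪ (Abs G X S1 ∪ (Abs G X S2 ∪ Abs G X S3)) →
      ∀ w ∈ Abs G X S, Rch G (X ∪ (Abs G X S1 ∪ (Abs G X S2 ∪ Abs G X S3))) x0 w := by
    rintro S hS w ⟨x, hx, u, hu, h⟩
    refine Rch.trans (.step ((hX x0 hx0 x hx).mono Set.subset_union_left) hu
      (hS ⟨x, hx, u, hu, .refl h.mem_left⟩)) (h.self.mono ?_)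
    intro y hy
    exact hS ⟨x, hx, u, hu, hy⟩
  rintro w (hw | hw | hw | hw)
  · exact (hX x0 hx0 w hw).mono Set.subset_union_left
  · exact key S1 (fun y hy => Or.inr (Or.inl hy)) w hw
  · exact key S2 (fun y hy => Or.inr (Or.inr (Or.inl hy))) w hw
  · exact key S3 (fun y hy => Or.inr (Or.inr (Or.inr hy))) w hw

theorem Abs.touch {X A : Set V} {a : V} (cA : Conn G A) (ha : a ∈ A) (h : Touch G A X) :
    Touch G {a} (X ∪ Abs G X (A \ {a})) := by
  obtain ⟨p, hp, q, hq, hpq⟩ := h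
  by_cases hpa : p = a
  · exact ⟨a, rfl, q, Or.inl hq, hpa ▸ hpq⟩
  · rcases (cA p hp a ha).sep {a} hpa with h | ⟨p', q', h, rfl, _, h'⟩
    · exact absurd rfl h.mem_right.2
    · exact ⟨q', rfl, p', Or.inr ⟨q, hq, p, hpq.symm, h⟩, h'.symm⟩

theorem Abs.sub {X S : Set V} : Abs G X S ⊆ S := fun _ ⟨_, _, _, _, h⟩ => h.mem_right

theorem zlem' (emb : PlanarEmbedding G) {U : Set V} {a b c : V} {A B J X N : Set V}
    (h : Theta G U a b c A B J X N) {Fa Fb Fc : Set V}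
    (ca : Conn G Fa) (cb : Conn G Fb) (cc : Conn G Fc)
    (aF : a ∈ Fa) (bF : b ∈ Fb) (cF : c ∈ Fc)
    (tab : Touch G Fa Fb) (tac : Touch G Fa Fc)
    (dab : Disjoint Fa Fb) (dac : Disjoint Fa Fc) (dbc : Disjoint Fb Fc)
    (dUa : Disjoint U Fa) (dUb : Disjoint U Fb) (dUc : Disjoint U Fc) :
    Disjoint (Abs G X (A \ {a})) (Abs G N (A \ {a})) := by
  rw [Set.disjoint_left]
  rintro w ⟨x, hx, u, hu, hw⟩ ⟨n, hn, u', hu', hw'⟩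
  refine zlem emb h ca cb cc aF bF cF tab tac dab dac dbc dUa dUb dUc
    (A' := {w | Rch G (A \ {a}) u w}) (conn_comp _ _ _) (fun y hy => Rch.mem_right hy) ?_
    ⟨u, .refl hw.mem_left, x, hx, hu.symm⟩ ⟨u', hw.trans hw'.symm, n, hn, hu'.symm⟩
  rcases (h.cA u hw.mem_left.1 a h.aA).sep {a} hw.mem_left.2 with h | ⟨p', q', h, hq, _, h'⟩
  · exact absurd rfl h.mem_right.2
  · exact ⟨p', h, q', hq, h'⟩

theorem case_two (emb : PlanarEmbedding G) {U : Set V} {a b c : V} {A B J X N : Set V}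
    (h : Theta G U a b c A B J X N) {Fa Fb Fc : Set V}
    (ca : Conn G Fa) (cb : Conn G Fb) (cc : Conn G Fc)
    (aF : a ∈ Fa) (bF : b ∈ Fb) (cF : c ∈ Fc)
    (tab : Touch G Fa Fb) (tac : Touch G Fa Fc) (tbc : Touch G Fb Fc)
    (dab : Disjoint Fa Fb) (dac : Disjoint Fa Fc) (dbc : Disjoint Fb Fc)
    (dUa : Disjoint U Fa) (dUb : Disjoint U Fb) (dUc : Disjoint U Fc)
    {H : Set V} (cH : Conn G H) (hUH : U ⊆ H)
    (dHa : Disjoint H Fa) (dHb : Disjoint H Fb) (dHc : Disjoint H Fc) : False := by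
  have z1 := zlem' emb h ca cb cc aF bF cF tab tac dab dac dbc dUa dUb dUc
  have z2 := zlem' emb h.rot cb cc ca bF cF aF tbc tab.symm dbc dab.symm dac.symm dUb dUc dUa
  have z3 := zlem' emb h.rot.rot cc ca cb cF aF bF tac.symm tbc.symm dac.symm dbc.symm dab
    dUc dUa dUb
  set SA := A \ {a} with hSA
  set SB := B \ {b} with hSB
  set SJ := J \ {c} with hSJ
  have uA : SA ⊆ U := fun x hx => (h.sA hx.1).resolve_left hx.2
  have uB : SB ⊆ U := fun x hx => (h.sB hx.1).resolve_left hx.2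
  have uJ : SJ ⊆ U := fun x hx => (h.sJ hx.1).resolve_left hx.2
  have aA : ∀ Y, Abs G Y SA ⊆ A := fun Y x hx => (Abs.sub hx).1
  have aB : ∀ Y, Abs G Y SB ⊆ B := fun Y x hx => (Abs.sub hx).1
  have aJ : ∀ Y, Abs G Y SJ ⊆ J := fun Y x hx => (Abs.sub hx).1
  have xU : ∀ Y, Y ⊆ U → Y ∪ (Abs G Y SA ∪ (Abs G Y SB ∪ Abs G Y SJ)) ⊆ U := by
    rintro Y hY w (hw | hw | hw | hw)
    · exact hY hw
    · exact uA (Abs.sub hw)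
    · exact uB (Abs.sub hw)
    · exact uJ (Abs.sub hw)
  have hdis : Disjoint (X ∪ (Abs G X SA ∪ (Abs G X SB ∪ Abs G X SJ)))
      (N ∪ (Abs G N SA ∪ (Abs G N SB ∪ Abs G N SJ))) := by
    simp only [Set.disjoint_union_left, Set.disjoint_union_right]
    refine ⟨⟨h.dXN, h.dAN.mono_left (aA _), h.dBN.mono_left (aB _), h.dJN.mono_left (aJ _)⟩,
      ⟨h.dAX.symm.mono_right (aA _), z1, h.dAB.symm.mono (aB _) (aA _),
        h.dAJ.symm.mono (aJ _) (aA _)⟩,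
      ⟨h.dBX.symm.mono_right (aB _), h.dAB.mono (aA _) (aB _), z2,
        h.dBJ.symm.mono (aJ _) (aB _)⟩,
      ⟨h.dJX.symm.mono_right (aJ _), h.dAJ.mono (aA _) (aJ _), h.dBJ.mono (aB _) (aJ _), z3⟩⟩
  have touches : ∀ Y, Touch G A Y → Touch G B Y → Touch G J Y →
      Touch G Fa (Y ∪ (Abs G Y SA ∪ (Abs G Y SB ∪ Abs G Y SJ))) ∧
      Touch G Fb (Y ∪ (Abs G Y SA ∪ (Abs G Y SB ∪ Abs G Y SJ))) ∧
      Touch G Fc (Y ∪ (Abs G Y SA ∪ (Abs G Y SB ∪ Abs G Y SJ))) := by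
    intro Y h1 h2 h3
    refine ⟨(Abs.touch h.cA h.aA h1).mono (by simpa using aF) ?_,
      (Abs.touch h.cB h.bB h2).mono (by simpa using bF) ?_,
      (Abs.touch h.cJ h.cJ' h3).mono (by simpa using cF) ?_⟩
    · rintro w (hw | hw)
      · exact Or.inl hw
      · exact Or.inr (Or.inl hw)
    · rintro w (hw | hw)
      · exact Or.inl hw
      · exact Or.inr (Or.inr (Or.inl hw))
    · rintro w (hw | hw)
      · exact Or.inl hw
      · exact Or.inr (Or.inr (Or.inr hw))
  obtain ⟨tx1, tx2, tx3⟩ := touches X h.tAX h.tBX h.tJX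
  obtain ⟨tn1, tn2, tn3⟩ := touches N h.tAN h.tBN h.tJN
  obtain ⟨_, _, x0, hx0, _⟩ := h.tAX
  obtain ⟨_, _, n0, hn0, _⟩ := h.tAN
  have cX' := Abs.conn (S1 := SA) (S2 := SB) (S3 := SJ) h.cX x0 hx0
  have cN' := Abs.conn (S1 := SA) (S2 := SB) (S3 := SJ) h.cN n0 hn0
  have sX' := (xU X h.sX).trans hUH
  have sN' := (xU N h.sN).trans hUH
  have hx0' : x0 ∈ X ∪ (Abs G X SA ∪ (Abs G X SB ∪ Abs G X SJ)) := Or.inl hx0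
  have hn0' : n0 ∈ N ∪ (Abs G N SA ∪ (Abs G N SB ∪ Abs G N SJ)) := Or.inl hn0
  generalize X ∪ (Abs G X SA ∪ (Abs G X SB ∪ Abs G X SJ)) = X' at *
  generalize N ∪ (Abs G N SA ∪ (Abs G N SB ∪ Abs G N SJ)) = N' at *
  have hNsub : N' ⊆ {w | Rch G (H \ X') n0 w} := fun w hw =>
    (cN' n0 hn0' w hw).mono fun y hy => ⟨sN' hy, Set.disjoint_right.1 hdis hy⟩
  have hNm : ∀ w ∈ {w | Rch G (H \ X') n0 w}, w ∈ H \ X' := fun w hw => Rch.mem_right hw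
  have hNH : {w | Rch G (H \ X') n0 w} ⊆ H := fun w hw => (hNm w hw).1
  refine noK5 emb Fa Fb Fc X' {w | Rch G (H \ X') n0 w} ca cb cc cX' (conn_comp _ _ _)
    tab tac tx1 (tn1.mono subset_rfl hNsub) tbc tx2 (tn2.mono subset_rfl hNsub) tx3
    (tn3.mono subset_rfl hNsub) ?_ dab dac (dHa.mono_left sX').symm (dHa.mono_left hNH).symm
    dbc (dHb.mono_left sX').symm (dHb.mono_left hNH).symm (dHc.mono_left sX').symm
    (dHc.mono_left hNH).symm (Set.disjoint_right.2 fun w hw => (hNm w hw).2)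
  rcases (cH n0 (sN' hn0') x0 (sX' hx0')).sep X' (Set.disjoint_right.1 hdis hn0') with
    h | ⟨p, q, h, hq, _, hpq⟩
  · exact absurd hx0' h.mem_right.2
  · exact ⟨q, hq, p, h, hpq.symm⟩

theorem aut_trivial [G.LocallyFinite] (emb : PlanarEmbedding G)
    (htrans : ∀ u v : V, ∃ α : G ≃g G, α u = v) (hone : OneEnded G)
    (hconn : Conn G (Set.univ : Set V)) [Infinite V] (hdeg : ∀ v, 3 ≤ G.degree v)
    (α : G ≃g G) {Fa Fb Fc : Set V} {a b c : V}
    (ca : Conn G Fa) (cb : Conn G Fb) (cc : Conn G Fc)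
    (aF : a ∈ Fa) (bF : b ∈ Fb) (cF : c ∈ Fc)
    (tab : Touch G Fa Fb) (tac : Touch G Fa Fc) (tbc : Touch G Fb Fc)
    (dab : Disjoint Fa Fb) (dac : Disjoint Fa Fc) (dbc : Disjoint Fb Fc)
    (cH : Conn G (Fa ∪ Fb ∪ Fc)ᶜ) (hfix : ∀ x ∈ Fa ∪ Fb ∪ Fc, α x = x) (y : V) : α y = y := by
  classical
  by_contra hy
  obtain ⟨C, hC⟩ : ∃ C, C = {w | Rch G {x | α x ≠ x} y w} := ⟨_, rfl⟩
  have hmov : ∀ x ∈ C, α x ≠ x := by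
    intro x hx; rw [hC] at hx; exact Rch.mem_right hx
  have hmov' : ∀ x ∈ α '' C, α x ≠ x := by
    rintro _ ⟨x, hx, rfl⟩
    exact fun h => hmov x hx (α.injective h)
  have hmovU : ∀ x ∈ C ∪ α '' C, α x ≠ x := fun x hx => hx.elim (hmov x) (hmov' x)
  have hyC : y ∈ C := by rw [hC]; exact .refl hy
  obtain ⟨NC, hNC⟩ : ∃ NC : Set V, NC = {x | x ∉ C ∧ ∃ z ∈ C, G.Adj x z} := ⟨_, rfl⟩
  have hNCfix : ∀ x ∈ NC, α x = x := by
    intro x hx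
    rw [hNC] at hx
    obtain ⟨h1, z, hz, hxz⟩ := hx
    by_contra h
    apply h1
    rw [hC] at hz ⊢
    exact Rch.step hz hxz.symm h
  have hNCadj : ∀ x ∈ NC, ∃ z ∈ C, G.Adj x z := by
    intro x hx; rw [hNC] at hx; exact hx.2
  by_cases hcase : ∃ r, r ∉ (C ∪ α '' C) ∪ NC
  · obtain ⟨r, hr⟩ := hcase
    obtain ⟨R, hR⟩ : ∃ R, R = {w | Rch G ((C ∪ α '' C) ∪ NC)ᶜ r w} := ⟨_, rfl⟩
    have hRm : ∀ x ∈ R, x ∉ (C ∪ α '' C) ∪ NC := by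
      intro x hx; rw [hR] at hx; exact Rch.mem_right hx
    have hrR : r ∈ R := by rw [hR]; exact .refl hr
    have cR : Conn G R := by rw [hR]; exact conn_comp _ _ _
    have hNR : ∀ x ∈ R, ∀ z, G.Adj x z → z ∉ R → z ∈ NC := by
      intro x hx z hxz hz
      have hxm := hRm x hx
      simp only [Set.mem_union, not_or] at hxm
      by_contra hzN
      apply hz
      rw [hR] at hx ⊢
      refine Rch.step hx hxz ?_
      rintro ((h | h) | h)
      · apply hxm.2
        rw [hNC]
        exact ⟨hxm.1.1, z, h, hxz⟩
      · obtain ⟨z', hz', rfl⟩ := h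
        obtain ⟨x', rfl⟩ := α.surjective x
        have hx' : x' ∈ NC := by
          rw [hNC]
          exact ⟨fun h => hxm.1.2 ⟨x', h, rfl⟩, z', hz', α.map_adj_iff.1 hxz⟩
        apply hxm.2
        rw [hNCfix x' hx']
        exact hx'
      · exact hzN h
    obtain ⟨a, ha, b, hb, c, hc, hab, hac, hbc⟩ := sep_three htrans hone hconn hdeg R
      {z | z ∉ R ∧ ∃ x ∈ R, G.Adj x z} cR r hrR (fun x hx z hxz hz => ⟨hz, x, hx, hxz⟩)
      (fun z hz => hz.1) y (fun h => hRm y h (Or.inl (Or.inl hyC)))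
      (by
        rintro ⟨h1, x, hx, hxy⟩
        exact hmov y hyC (hNCfix y (hNR x hx y hxy h1)))
    have haN := hNR _ ha.2.choose_spec.1 a ha.2.choose_spec.2 ha.1
    have hbN := hNR _ hb.2.choose_spec.1 b hb.2.choose_spec.2 hb.1
    have hcN := hNR _ hc.2.choose_spec.1 c hc.2.choose_spec.2 hc.1
    obtain ⟨A, B, J, X, N, h⟩ := theta_of_aut hconn α y C hC hy a b c hab hac hbc
      (hNCfix a haN) (hNCfix b hbN) (hNCfix c hcN) (hNCadj a haN) (hNCadj b hbN) (hNCadj c hcN)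
    have dU : Disjoint (C ∪ α '' C) R :=
      Set.disjoint_right.2 fun x hx hx' => hRm x hx (Or.inl hx')
    have dI : ∀ z ∈ NC, Disjoint (insert z (C ∪ α '' C)) R := fun z hz =>
      Set.disjoint_insert_left.2 ⟨fun h => hRm z h (Or.inr hz), dU⟩
    have tI : ∀ z S, z ∈ S → (∃ x ∈ R, G.Adj x z) → Touch G S R := by
      rintro z S hz ⟨x, hx, hxz⟩
      exact ⟨z, hz, x, hx, hxz.symm⟩
    exact noK33 emb A B J X N R h.cA h.cB h.cJ h.cX h.cN cR h.tAX h.tAN (tI a A h.aA ha.2)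
      h.tBX h.tBN (tI b B h.bB hb.2) h.tJX h.tJN (tI c J h.cJ' hc.2)
      h.dAB h.dAJ h.dAX h.dAN ((dI a haN).mono_left h.sA) h.dBJ h.dBX h.dBN
      ((dI b hbN).mono_left h.sB) h.dJX h.dJN ((dI c hcN).mono_left h.sJ)
      h.dXN (dU.mono_left h.sX) (dU.mono_left h.sN)
  · have hall : ∀ z, α z = z → z ∈ NC := by
      intro z hz
      by_contra h
      exact hcase ⟨z, fun h' => h'.elim (fun h'' => hmovU z h'' hz) h⟩
    have fa := hfix a (Or.inl (Or.inl aF))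
    have fb := hfix b (Or.inl (Or.inr bF))
    have fc := hfix c (Or.inr cF)
    have hab : a ≠ b := by rintro rfl; exact Set.disjoint_left.1 dab aF bF
    have hac : a ≠ c := by rintro rfl; exact Set.disjoint_left.1 dac aF cF
    have hbc : b ≠ c := by rintro rfl; exact Set.disjoint_left.1 dbc bF cF
    obtain ⟨A, B, J, X, N, h⟩ := theta_of_aut hconn α y C hC hy a b c hab hac hbc
      fa fb fc (hNCadj a (hall a fa)) (hNCadj b (hall b fb)) (hNCadj c (hall c fc))
    have hUH : C ∪ α '' C ⊆ (Fa ∪ Fb ∪ Fc)ᶜ := fun x hx hx' => hmovU x hx (hfix x hx')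
    have dHa : Disjoint (Fa ∪ Fb ∪ Fc)ᶜ Fa :=
      Set.disjoint_left.2 fun x hx hx' => hx (Or.inl (Or.inl hx'))
    have dHb : Disjoint (Fa ∪ Fb ∪ Fc)ᶜ Fb :=
      Set.disjoint_left.2 fun x hx hx' => hx (Or.inl (Or.inr hx'))
    have dHc : Disjoint (Fa ∪ Fb ∪ Fc)ᶜ Fc :=
      Set.disjoint_left.2 fun x hx hx' => hx (Or.inr hx')
    exact case_two emb h ca cb cc aF bF cF tab tac tbc dab dac dbc (dHa.mono_left hUH)
      (dHb.mono_left hUH) (dHc.mono_left hUH) cH hUH dHa dHb dHc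

end Fin

section Cyc

variable {V : Type*} {G : SimpleGraph V}

theorem cyc_fixed {v : V} {w : G.Walk v v} (hw : w.IsCycle) (α : G ≃g G)
    (hE : ∀ x y, s(x, y) ∈ w.edges → s(α x, α y) ∈ w.edges) {p q : V} (hpq : s(p, q) ∈ w.edges)
    (hp : α p = p) (hq : α q = q) : ∀ x ∈ w.support, α x = x := by
  have prop : ∀ x t, s(x, t) ∈ w.edges → (α x = x ∧ ∃ z, α z = z ∧ s(x, z) ∈ w.edges) →
      (α t = t ∧ ∃ z, α z = z ∧ s(t, z) ∈ w.edges) := by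
    rintro x t hxt ⟨hx, z, hz, hxz⟩
    have ht : α t = t := by
      by_cases htz : t = z
      · rw [htz, hz]
      have h2 := hw.ncard_neighborSet_toSubgraph_eq_two (Walk.fst_mem_support_of_mem_edges _ hxt)
      obtain ⟨m, n, hmn, hset⟩ := Set.ncard_eq_two.1 h2
      have hmem : ∀ y, s(x, y) ∈ w.edges → y = m ∨ y = n := by
        intro y hy
        have : y ∈ w.toSubgraph.neighborSet x := by
          rw [Subgraph.mem_neighborSet, Walk.adj_toSubgraph_iff_mem_edges]; exact hy
        rw [hset] at this
        simpa using this
      have h3 := hE x t hxt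
      rw [hx] at h3
      have h4 : α t ≠ z := fun h => htz (α.injective (h.trans hz.symm))
      have e1 := hmem _ h3
      have e2 := hmem _ hxt
      have e3 := hmem _ hxz
      grind
    exact ⟨ht, x, hx, by rw [Sym2.eq_swap]; exact hxt⟩
  have hstep : ∀ i < w.length, s(w.getVert i, w.getVert (i + 1)) ∈ w.edges := by
    intro i hi
    rw [← Walk.adj_toSubgraph_iff_mem_edges]
    exact w.toSubgraph_adj_getVert hi
  set P : V → Prop := fun x => (α x = x ∧ ∃ z, α z = z ∧ s(x, z) ∈ w.edges) with hP
  have hall : ∀ i ≤ w.length, (P (w.getVert i) ↔ P (w.getVert 0)) := by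
    intro i
    induction i with
    | zero => intro _; rfl
    | succ n ih =>
      intro hn
      rw [← ih (by omega)]
      exact ⟨prop _ _ (by rw [Sym2.eq_swap]; exact hstep n (by omega)),
        prop _ _ (hstep n (by omega))⟩
  have hPp : P p := ⟨hp, q, hq, hpq⟩
  obtain ⟨i, hi, hil⟩ := Walk.mem_support_iff_exists_getVert.1
    (Walk.fst_mem_support_of_mem_edges _ hpq)
  rw [← hi, hall i hil] at hPp
  intro x hx
  obtain ⟨k, rfl, hkl⟩ := Walk.mem_support_iff_exists_getVert.1 hx
  exact ((hall k hkl).2 hPp).1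

theorem deg_three [G.LocallyFinite] (htrans : ∀ u v : V, ∃ α : G ≃g G, α u = v)
    (hconn : Conn G (Set.univ : Set V)) [Infinite V] {v : V} {w : G.Walk v v} (hw : w.IsCycle)
    (x : V) : 3 ≤ G.degree x := by
  by_contra hx
  have hdeg : ∀ y, G.degree y ≤ 2 := by
    intro y
    obtain ⟨α, rfl⟩ := htrans x y
    rw [Iso.degree_eq]
    omega
  have hall : ∀ z, z ∈ w.support := by
    intro z
    refine (hconn v trivial z trivial).inv (fun z => z ∈ w.support) w.start_mem_support ?_
    intro p q hp _ _ hpq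
    have h2 := hw.ncard_neighborSet_toSubgraph_eq_two hp
    have h3 : (G.neighborSet p).ncard ≤ 2 := by
      rw [← Nat.card_coe_set_eq, Nat.card_eq_fintype_card, card_neighborSet_eq_degree]
      exact hdeg p
    have h4 : w.toSubgraph.neighborSet p = G.neighborSet p :=
      Set.eq_of_subset_of_ncard_le (Subgraph.neighborSet_subset _ _) (by omega) (Set.toFinite _)
    have h5 : q ∈ w.toSubgraph.neighborSet p := by rw [h4]; exact hpq
    rw [Subgraph.mem_neighborSet, Walk.adj_toSubgraph_iff_mem_edges] at h5
    exact Walk.snd_mem_support_of_mem_edges _ h5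
  have : (Set.univ : Set V).Finite := (List.finite_toSet w.support).subset fun z _ => hall z
  exact Set.infinite_univ this

theorem face_rigid [G.LocallyFinite] (emb : PlanarEmbedding G)
    (htrans : ∀ u v : V, ∃ α : G ≃g G, α u = v) (hone : OneEnded G)
    {v : V} {w : G.Walk v v} (hw : IsPeripheral G w) (α : G ≃g G)
    (hfix : ∀ x ∈ w.support, α x = x) (y : V) : α y = y := by
  obtain ⟨hconn, hinf⟩ := one_end_conn htrans hone
  obtain ⟨hc, -, hper⟩ := hw
  have h3 := hc.three_le_length
  have inj : ∀ i j, i < w.length → j < w.length → w.getVert i = w.getVert j → i = j := by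
    intro i j hi hj h
    exact hc.getVert_injOn' (by simp; omega) (by simp; omega) h
  have adj : ∀ i < w.length, G.Adj (w.getVert i) (w.getVert (i + 1)) :=
    fun i hi => w.adj_getVert_succ hi
  obtain ⟨Fc, hFc⟩ : ∃ Fc : Set V, Fc = {x | ∃ i, 2 ≤ i ∧ i < w.length ∧ w.getVert i = x} :=
    ⟨_, rfl⟩
  have memFc : ∀ i, 2 ≤ i → i < w.length → w.getVert i ∈ Fc := by
    intro i h1 h2; rw [hFc]; exact ⟨i, h1, h2, rfl⟩
  have hF : ({w.getVert 0} ∪ {w.getVert 1} ∪ Fc : Set V) = {x | x ∈ w.support} := by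
    ext x
    constructor
    · rintro ((rfl | rfl) | h)
      · exact Walk.getVert_mem_support _ _
      · exact Walk.getVert_mem_support _ _
      · rw [hFc] at h
        obtain ⟨i, _, _, rfl⟩ := h
        exact Walk.getVert_mem_support _ _
    · intro hx
      obtain ⟨i, rfl, hi⟩ := Walk.mem_support_iff_exists_getVert.1 hx
      rcases Nat.lt_or_ge i 2 with h | h
      · left
        interval_cases i
        · exact Or.inl rfl
        · exact Or.inr rfl
      · rcases Nat.lt_or_ge i w.length with h' | h'
        · exact Or.inr (memFc i h h')
        · left; left
          have : i = w.length := by omega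
          simp [this]
  have cFc : Conn G Fc := by
    refine conn_of_center (w.getVert 2) ?_
    have : ∀ i, 2 ≤ i → i < w.length → Rch G Fc (w.getVert 2) (w.getVert i) := by
      intro i h2
      induction i, h2 using Nat.le_induction with
      | base => intro h; exact .refl (memFc 2 le_rfl h)
      | succ n hn ih =>
        intro h
        exact .step (ih (by omega)) (adj n (by omega)) (memFc _ (by omega) h)
    intro x hx
    rw [hFc] at hx
    obtain ⟨i, h1, h2, rfl⟩ := hx
    exact this i h1 h2
  refine aut_trivial emb htrans hone hconn (deg_three htrans hconn hc) α
    (Fa := {w.getVert 0}) (Fb := {w.getVert 1}) (Fc := Fc) (conn_singleton _) (conn_singleton _)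
    cFc rfl rfl (memFc 2 le_rfl (by omega)) ⟨_, rfl, _, rfl, adj 0 (by omega)⟩
    ⟨_, rfl, _, memFc (w.length - 1) (by omega) (by omega), ?_⟩
    ⟨_, rfl, _, memFc 2 le_rfl (by omega), adj 1 (by omega)⟩ ?_ ?_ ?_ ?_ ?_ y
  · have := adj (w.length - 1) (by omega)
    rw [Nat.sub_add_cancel (by omega), Walk.getVert_length] at this
    rw [Walk.getVert_zero]
    exact this.symm
  · rw [Set.disjoint_singleton]
    intro h
    have := inj 0 1 (by omega) (by omega) h
    omega
  · rw [Set.disjoint_singleton_left, hFc]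
    rintro ⟨i, h1, h2, h⟩
    have := inj i 0 h2 (by omega) h
    omega
  · rw [Set.disjoint_singleton_left, hFc]
    rintro ⟨i, h1, h2, h⟩
    have := inj i 1 h2 (by omega) h
    omega
  · rw [hF]
    rcases hper with h | h
    · exfalso
      have : (Set.univ : Set V).Finite := (List.finite_toSet w.support).subset fun z _ => by
        by_contra hz
        have : z ∈ ({x | x ∉ w.support} : Set V) := hz
        rw [h] at this
        exact this
      exact Set.infinite_univ this
    · intro x hx z hz
      exact rch_of_reach (h.preconnected ⟨x, hx⟩ ⟨z, hz⟩)
  · rw [hF]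
    exact hfix

theorem flag_rigid [G.LocallyFinite] (emb : PlanarEmbedding G)
    (htrans : ∀ u v : V, ∃ α : G ≃g G, α u = v) (hone : OneEnded G)
    (f : GFlag V) (hf : IsFlag G f) (α : G ≃g G) (hα : flagMap α f = f) (y : V) : α y = y := by
  obtain ⟨u, e, F⟩ := f
  obtain ⟨hu, he, v, w, hw, hF⟩ := hf
  simp only [flagMap, Prod.mk.injEq] at hα hu he hF
  obtain ⟨h1, h2, h3⟩ := hα
  obtain ⟨q, rfl⟩ := Sym2.mem_iff_exists.1 hu
  have hq : α q = q := by
    rw [Sym2.map_mk, h1] at h2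
    exact Sym2.congr_right.1 h2
  refine face_rigid emb htrans hone hw α (cyc_fixed hw.1 α ?_ (p := u) (q := q) ?_ h1 hq) y
  · intro a b hab
    have : s(α a, α b) ∈ F := by
      rw [← h3]
      exact ⟨s(a, b), by rw [hF]; exact hab, rfl⟩
    rw [hF] at this
    exact this
  · rw [hF] at he; exact he

theorem flagMap_trans (α β : G ≃g G) (f : GFlag V) :
    flagMap (α.trans β) f = flagMap β (flagMap α f) := by
  obtain ⟨u, e, F⟩ := f
  simp [flagMap, Set.image_image, Sym2.map_map, Function.comp_def]

theorem flagMap_refl (f : GFlag V) : flagMap (Iso.refl : G ≃g G) f = f := by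
  obtain ⟨u, e, F⟩ := f
  have h : (⇑(Iso.refl : G ≃g G) : V → V) = id := rfl
  simp [flagMap, h]

theorem flagMap_symm (α : G ≃g G) (f : GFlag V) : flagMap α.symm (flagMap α f) = f := by
  rw [← flagMap_trans, show α.trans α.symm = Iso.refl from by ext x; simp, flagMap_refl]

end Cyc

/-- Let `G` be planar, 1-ended, vertex-transitive and locally finite, `Δ` a fundamental
domain of flags at `o` (a connected sequence of flags at `o` containing exactly one flag
from each `Aut(G)`-orbit) and `φ` the map assigning to each flag the unique flag of `Δ` in
its orbit. If `φ f = φ h`, then there is exactly one automorphism `a` of `G` with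
`a f = h`. -/
theorem unique_automorphism_of_same_colour
    {V : Type*} (G : SimpleGraph V) [G.LocallyFinite]
    (hpl : Nonempty (PlanarEmbedding G))
    (htrans : ∀ u v : V, ∃ α : G ≃g G, α u = v)
    (hone : OneEnded G) (o : V)
    (Δ : List (GFlag V))
    (hΔflag : ∀ f ∈ Δ, IsFlag G f ∧ f.1 = o)
    (hΔchain : Δ.Chain' FlagIncident)
    (hΔorbit : ∀ f : GFlag V, IsFlag G f → ∃! g : GFlag V,
      g ∈ Δ ∧ ∃ α : G ≃g G, flagMap α f = g)
    (φ : GFlag V → GFlag V)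
    (hφ : ∀ f : GFlag V, IsFlag G f → φ f ∈ Δ ∧ ∃ α : G ≃g G, flagMap α f = φ f)
    (f h : GFlag V) (hf : IsFlag G f) (hh : IsFlag G h) (heq : φ f = φ h) :
    ∃! α : G ≃g G, flagMap α f = h := by
  obtain ⟨emb⟩ := hpl
  obtain ⟨-, α, hα⟩ := hφ f hf
  obtain ⟨-, β, hβ⟩ := hφ h hh
  have h0 : flagMap (α.trans β.symm) f = h := by
    rw [flagMap_trans, hα, heq, ← hβ, flagMap_symm]
  refine ⟨α.trans β.symm, h0, ?_⟩
  intro γ hγ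
  have h1 : flagMap (γ.trans (α.trans β.symm).symm) f = f := by
    rw [flagMap_trans, show flagMap γ f = h from hγ]
    conv_lhs => rw [← h0]
    rw [flagMap_symm]
  have h2 := flag_rigid emb htrans hone f hf _ h1
  ext x
  have h3 := congrArg (α.trans β.symm) (h2 x)
  simpa using h3
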